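/- arXiv:1407.0615 — 4 statements merged into one kernel-verified Lean document; each statement's English description precedes it below -/
import Mathlib

section
/- Let ν be a real number with ν ≥ 1. For every real z with 0 < z ≤ ν one has J_{ν−1}(z) − J_ν(z) > 0; in particular, the first positive zero λ⁻_{ν−1,1} of the function z ↦ J_{ν−1}(z) − J_ν(z) satisfies λ⁻_{ν−1,1} > ν. -/
/-- Bessel function of the first kind of real order `ν`, defined via its power series
`J_ν(z) = ∑ₘ (−1)^m / (m! Γ(ν+m+1)) (z/2)^(ν+2m)` (with real-exponent powers). -/
noncomputable def besselJ (ν z : ℝ) : ℝ :=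
  ∑' m : ℕ, ((-1 : ℝ) ^ m / (Nat.factorial m * Real.Gamma (ν + m + 1))) *
    (z / 2) ^ (ν + 2 * (m : ℝ))

/-- `x` (indexed by `k ≥ 1`) enumerates the positive zeroes of `f`: it is strictly
increasing on indices `k ≥ 1`, each `x k` is a positive zero of `f`, and every positive
zero of `f` is some `x k`. -/
def EnumPosZeros (f : ℝ → ℝ) (x : ℕ → ℝ) : Prop :=
  StrictMonoOn x (Set.Ici 1) ∧ (∀ k, 1 ≤ k → 0 < x k ∧ f (x k) = 0) ∧
    ∀ z : ℝ, 0 < z → f z = 0 → ∃ k, 1 ≤ k ∧ x k = z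

noncomputable def bT (μ x : ℝ) (m : ℕ) : ℝ :=
  ((-1 : ℝ) ^ m / (Nat.factorial m * Real.Gamma (μ + m + 1))) * x ^ (μ + 2 * (m : ℝ))

noncomputable def bC (μ x : ℝ) (m : ℕ) : ℝ :=
  x ^ (μ + 2 * (m : ℝ)) / (Nat.factorial m * Real.Gamma (μ + m + 1))

lemma bT_eq (μ x : ℝ) (m : ℕ) : bT μ x m = (-1) ^ m * bC μ x m := by
  unfold bT bC; ring

lemma bC_pos (μ x : ℝ) (m : ℕ) (hμ : 0 ≤ μ) (hx : 0 < x) : 0 < bC μ x m := by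
  unfold bC
  have := Real.Gamma_pos_of_pos (show 0 < μ + m + 1 by positivity)
  positivity

lemma bC_succ (μ x : ℝ) (m : ℕ) (hμ : 0 ≤ μ) (hx : 0 < x) :
    bC μ x (m + 1) = x ^ 2 / ((m + 1) * (μ + m + 1)) * bC μ x m := by
  unfold bC
  have h1 : 0 < μ + m + 1 := by positivity
  have hG := Real.Gamma_pos_of_pos h1
  have e1 : μ + ((m + 1 : ℕ) : ℝ) + 1 = (μ + m + 1) + 1 := by push_cast; ring
  have e2 : μ + 2 * ((m + 1 : ℕ) : ℝ) = (μ + 2 * m) + (2 : ℕ) := by push_cast; ring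
  rw [e1, e2, Real.Gamma_add_one h1.ne', Real.rpow_add_natCast hx.ne', Nat.factorial_succ]
  have := Nat.factorial_pos m
  push_cast
  field_simp

lemma bT_summable (μ x : ℝ) (hμ : 0 ≤ μ) (hx : 0 < x) : Summable (bT μ x) := by
  apply summable_of_ratio_norm_eventually_le (r := 1 / 2) (by norm_num)
  obtain ⟨N, hN⟩ := exists_nat_ge (2 * x ^ 2)
  filter_upwards [Filter.eventually_ge_atTop N] with m hm
  have hm' : (N : ℝ) ≤ m := by exact_mod_cast hm
  have hp := bC_pos μ x m hμ hx
  have hp1 := bC_pos μ x (m + 1) hμ hx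
  simp only [bT_eq, norm_mul, norm_pow, norm_neg, norm_one, one_pow, one_mul, Real.norm_eq_abs]
  rw [abs_of_pos hp, abs_of_pos hp1, bC_succ μ x m hμ hx]
  have hm0 : (0 : ℝ) ≤ m := by positivity
  refine mul_le_mul_of_nonneg_right ?_ hp.le
  rw [div_le_div_iff₀ (by positivity) (by norm_num)]
  nlinarith [mul_nonneg hm0 hμ, mul_nonneg hm0 hm0]

lemma bC_antitone (μ x : ℝ) (hμ : 0 ≤ μ) (hx : 0 < x) (h : x ^ 2 ≤ μ + 1) :
    Antitone (bC μ x) := by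
  apply antitone_nat_of_succ_le
  intro m
  rw [bC_succ μ x m hμ hx]
  have hm0 : (0 : ℝ) ≤ m := by positivity
  apply mul_le_of_le_one_left (bC_pos μ x m hμ hx).le
  rw [div_le_one (by positivity)]
  nlinarith [mul_nonneg hm0 hμ, mul_nonneg hm0 hm0]

lemma bessel_eq (μ z : ℝ) : besselJ μ z = ∑' m, bT μ (z / 2) m := rfl

lemma bessel_bounds (μ z : ℝ) (hμ : 0 ≤ μ) (hz : 0 < z) (h : (z / 2) ^ 2 ≤ μ + 1) :
    bC μ (z / 2) 0 * (1 - (z / 2) ^ 2 / (μ + 1)) ≤ besselJ μ z ∧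
      besselJ μ z ≤ bC μ (z / 2) 0 := by
  have hx : 0 < z / 2 := by positivity
  have ht := (bT_summable μ (z / 2) hμ hx).hasSum.tendsto_sum_nat
  rw [← bessel_eq] at ht
  simp only [bT_eq] at ht
  have ha := bC_antitone μ (z / 2) hμ hx h
  have h1 := ha.alternating_series_le_tendsto ht 1
  have h2 := ha.tendsto_le_alternating_series ht 0
  simp only [Finset.sum_range_succ, Finset.sum_range_zero, mul_one, mul_zero, zero_add, pow_zero,
    one_mul, pow_one] at h1 h2
  have := bC_succ μ (z / 2) 0 hμ hx
  simp only [zero_add, Nat.cast_zero, one_mul, add_zero] at this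
  refine ⟨?_, h2⟩
  rw [this] at h1
  linarith

lemma bessel_rec (μ z : ℝ) (hμ : 1 ≤ μ) (hz : 0 < z) :
    besselJ (μ - 1) z + besselJ (μ + 1) z = 2 * μ / z * besselJ μ z := by
  obtain ⟨x, rfl⟩ : ∃ x, z = 2 * x := ⟨z / 2, by ring⟩
  have hx : 0 < x := by linarith
  simp only [bessel_eq, mul_div_cancel_left₀ x (two_ne_zero' ℝ)]
  have s0 := bT_summable (μ - 1) x (by linarith) hx
  have s1 := bT_summable μ x (by linarith) hx
  have s2 := bT_summable (μ + 1) x (by linarith) hx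
  rw [← tsum_mul_left, s0.tsum_eq_zero_add, (s1.mul_left _).tsum_eq_zero_add]
  have s0' := (summable_nat_add_iff 1).2 s0
  rw [add_assoc, ← s0'.tsum_add s2]
  congr 1
  · unfold bT
    have := Real.Gamma_add_one (show μ ≠ 0 by linarith)
    have hG := Real.Gamma_pos_of_pos (show 0 < μ by linarith)
    simp [this, Real.rpow_sub_one hx.ne']
    field_simp
  · congr 1
    ext m
    unfold bT
    have h1 : 0 < μ + m + 1 := by positivity
    have hG := Real.Gamma_pos_of_pos h1
    have e0 : μ - 1 + ((m + 1 : ℕ) : ℝ) + 1 = μ + m + 1 := by push_cast; ring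
    have e1 : μ + ((m + 1 : ℕ) : ℝ) + 1 = (μ + m + 1) + 1 := by push_cast; ring
    have e2 : μ + 1 + m + 1 = (μ + m + 1) + 1 := by ring
    have f0 : μ - 1 + 2 * ((m + 1 : ℕ) : ℝ) = (μ + 2 * m) + 1 := by push_cast; ring
    have f1 : μ + 2 * ((m + 1 : ℕ) : ℝ) = (μ + 2 * m) + (2 : ℕ) := by push_cast; ring
    have f2 : μ + 1 + 2 * (m : ℝ) = (μ + 2 * m) + 1 := by ring
    rw [e0, e1, e2, f0, f1, f2, Real.Gamma_add_one h1.ne', Real.rpow_add_natCast hx.ne',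
      Real.rpow_add_one hx.ne', Nat.factorial_succ, pow_succ]
    have := Nat.factorial_pos m
    push_cast
    field_simp
    ring

lemma bessel_base (μ z : ℝ) (hμ : 1 ≤ μ) (hz : 0 < z) (h : (z / 2) ^ 2 + z / 2 < μ) :
    0 < besselJ μ z ∧ besselJ μ z < besselJ (μ - 1) z := by
  have hx : 0 < z / 2 := by positivity
  have b1 := bessel_bounds μ z (by linarith) hz (by linarith)
  have b0 := bessel_bounds (μ - 1) z (by linarith) hz (by linarith)
  have p0 := bC_pos (μ - 1) (z / 2) 0 (by linarith) hx
  have p1 := bC_pos μ (z / 2) 0 (by linarith) hx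
  constructor
  · refine lt_of_lt_of_le (mul_pos p1 ?_) b1.1
    rw [sub_pos, div_lt_one (by linarith)]
    linarith
  · refine lt_of_le_of_lt b1.2 (lt_of_lt_of_le ?_ b0.1)
    have e : bC μ (z / 2) 0 = bC (μ - 1) (z / 2) 0 * (z / 2 / μ) := by
      unfold bC
      have := Real.Gamma_add_one (show μ ≠ 0 by linarith)
      have hG := Real.Gamma_pos_of_pos (show 0 < μ by linarith)
      simp only [Nat.cast_zero, mul_zero, add_zero, sub_add_cancel, this,
        Real.rpow_sub_one hx.ne']
      field_simp
    rw [e]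
    apply mul_lt_mul_of_pos_left _ p0
    rw [sub_add_cancel, lt_sub_iff_add_lt, ← add_div, div_lt_one (by linarith)]
    linarith

lemma bessel_main (z : ℝ) (hz : 0 < z) (n : ℕ) : ∀ μ : ℝ, 1 ≤ μ → z ≤ μ →
    (z / 2) ^ 2 + z / 2 < μ + n → 0 < besselJ μ z ∧ besselJ μ z < besselJ (μ - 1) z := by
  induction n with
  | zero =>
    intro μ hμ _ h
    exact bessel_base μ z hμ hz (by simpa using h)
  | succ n ih =>
    intro μ hμ hzμ h
    obtain ⟨h1, h2⟩ := ih (μ + 1) (by linarith) (by linarith) (by push_cast at h; linarith)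
    rw [add_sub_cancel_right] at h2
    have hr := bessel_rec μ z hμ hz
    have hp : 0 < besselJ μ z := h1.trans h2
    have : 2 ≤ 2 * μ / z := by rw [le_div_iff₀ hz]; linarith
    exact ⟨hp, by nlinarith⟩

/-- For `ν ≥ 1` and all `0 < z ≤ ν`, `J_{ν−1}(z) − J_ν(z) > 0`; in particular
the first positive zero `λ⁻_{ν−1,1}` of `z ↦ J_{ν−1}(z) − J_ν(z)` satisfies `λ⁻_{ν−1,1} > ν`. -/
theorem stmt0 (ν : ℝ) (hν : 1 ≤ ν) (lam : ℕ → ℝ)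
    (hlam : EnumPosZeros (fun z => besselJ (ν - 1) z - besselJ ν z) lam) :
    (∀ z : ℝ, 0 < z → z ≤ ν → 0 < besselJ (ν - 1) z - besselJ ν z) ∧ ν < lam 1 := by
  have key : ∀ z : ℝ, 0 < z → z ≤ ν → 0 < besselJ (ν - 1) z - besselJ ν z := by
    intro z hz hzν
    obtain ⟨n, hn⟩ := exists_nat_gt ((z / 2) ^ 2 + z / 2)
    exact sub_pos.2 (bessel_main z hz n ν hν hzν (by linarith)).2
  refine ⟨key, ?_⟩
  by_contra! hle
  obtain ⟨h1, h2⟩ := hlam.2.1 1 le_rfl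
  exact (key _ h1 hle).ne' h2
end

section
/- Let ν be a real number with ν ≥ 1, and let 0 < a < b be two consecutive positive zeroes of J_{ν−1} (i.e. J_{ν−1}(a) = J_{ν−1}(b) = 0 and J_{ν−1}(z) ≠ 0 for all z with a < z < b). Then there exists exactly one z in the open interval (a, b) with J_{ν−1}(z) − J_ν(z) = 0. Conversely, if 0 < a < b are two consecutive positive zeroes of z ↦ J_{ν−1}(z) − J_ν(z), then there exists exactly one z in (a, b) with J_{ν−1}(z) = 0. -/
noncomputable def hcoef (ν : ℝ) (m : ℕ) : ℝ :=
  (-1 : ℝ) ^ m / (Nat.factorial m * Real.Gamma (ν + m + 1))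

noncomputable def hfun (ν x : ℝ) : ℝ := ∑' m : ℕ, hcoef ν m * x ^ m

noncomputable def jfun (ν z : ℝ) : ℝ := (z / 2) ^ ν * hfun ν (z ^ 2 / 4)

lemma gamma_ge (ν : ℝ) (hν : 0 ≤ ν) (m : ℕ) :
    Real.Gamma (ν + 1) ≤ Real.Gamma (ν + m + 1) := by
  induction m with
  | zero => simp
  | succ k ih =>
    have h0 : (0 : ℝ) ≤ k := Nat.cast_nonneg k
    have h1 : Real.Gamma (ν + (k + 1 : ℕ) + 1) = (ν + k + 1) * Real.Gamma (ν + k + 1) := by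
      rw [← Real.Gamma_add_one (by positivity)]
      push_cast; ring_nf
    rw [h1]
    have h2 : 0 < Real.Gamma (ν + k + 1) := Real.Gamma_pos_of_pos (by positivity)
    nlinarith [mul_nonneg (add_nonneg hν h0) h2.le]

lemma hcoef_bound (ν : ℝ) (hν : 0 ≤ ν) (m : ℕ) :
    |hcoef ν m| ≤ (Real.Gamma (ν + 1))⁻¹ * (1 / (Nat.factorial m : ℝ)) := by
  have h0 : 0 < Real.Gamma (ν + 1) := Real.Gamma_pos_of_pos (by positivity)
  have h1 := gamma_ge ν hν m
  have h2 : (0 : ℝ) < Nat.factorial m := by positivity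
  have h3 : 0 < Real.Gamma (ν + m + 1) := h0.trans_le h1
  unfold hcoef
  rw [abs_div, abs_pow, abs_neg, abs_one, one_pow, abs_of_pos (mul_pos h2 h3)]
  rw [← one_div, one_div_mul_one_div, mul_comm (Real.Gamma (ν + 1))]
  gcongr

lemma hsummable (ν : ℝ) (hν : 0 ≤ ν) (x : ℝ) : Summable (fun m => hcoef ν m * x ^ m) := by
  have hs := (Real.summable_pow_div_factorial |x|).mul_left (Real.Gamma (ν + 1))⁻¹
  refine Summable.of_norm_bounded hs fun m => ?_
  rw [Real.norm_eq_abs, abs_mul, abs_pow]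
  calc _ ≤ ((Real.Gamma (ν + 1))⁻¹ * (1 / (Nat.factorial m : ℝ))) * |x| ^ m := by
        gcongr; exact hcoef_bound ν hν m
    _ = _ := by ring

lemma hcoef_succ (ν : ℝ) (m : ℕ) :
    hcoef ν (m + 1) * ((m : ℝ) + 1) = - hcoef (ν + 1) m := by
  unfold hcoef
  have h : ν + ((m + 1 : ℕ) : ℝ) + 1 = ν + 1 + m + 1 := by push_cast; ring
  rw [h, Nat.factorial_succ, pow_succ]
  have : (m : ℝ) + 1 ≠ 0 := by positivity
  push_cast
  rw [mul_assoc ((m : ℝ) + 1), ← div_div, div_right_comm, mul_comm]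
  field_simp

lemma hfun_deriv (ν : ℝ) (hν : 0 ≤ ν) (x : ℝ) :
    HasDerivAt (hfun ν) (-hfun (ν + 1) x) x := by
  set R := |x| + 1 with hR
  have hR0 : 0 ≤ R := by positivity
  set u : ℕ → ℝ := fun m => (Real.Gamma (ν + 1))⁻¹ * (1 / (Nat.factorial m : ℝ)) *
    (m * R ^ (m - 1)) with hu
  have hsu : Summable u := by
    rw [← summable_nat_add_iff 1]
    have hs := (Real.summable_pow_div_factorial R).mul_left (Real.Gamma (ν + 1))⁻¹
    refine hs.congr fun m => ?_
    simp only [hu, Nat.factorial_succ, Nat.add_sub_cancel]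
    have : (m : ℝ) + 1 ≠ 0 := by positivity
    push_cast
    field_simp
  have hx : x ∈ Metric.ball (0 : ℝ) R := by simp [hR]
  have key := hasDerivAt_tsum_of_isPreconnected (𝕜 := ℝ) (u := u)
    (g := fun m y => hcoef ν m * y ^ m) (g' := fun m y => hcoef ν m * (m * y ^ (m - 1)))
    hsu Metric.isOpen_ball (convex_ball (0 : ℝ) R).isPreconnected
    (fun m y _ => (hasDerivAt_pow m y).const_mul _)
    (fun m y hy => by
      have hy' : |y| ≤ R := by
        have := (mem_ball_zero_iff.1 hy).le
        simpa using this
      rw [Real.norm_eq_abs, abs_mul, abs_mul, abs_pow, Nat.abs_cast]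
      simp only [hu]
      gcongr
      exact hcoef_bound ν hν m)
    hx (hsummable ν hν x) hx
  have e : ∑' m : ℕ, hcoef ν m * (m * x ^ (m - 1)) = - hfun (ν + 1) x := by
    have hs' : Summable fun m : ℕ => hcoef ν m * (m * x ^ (m - 1)) := by
      rw [← summable_nat_add_iff 1]
      refine (hsummable (ν + 1) (by linarith) x).neg.congr fun m => ?_
      simp only [Nat.add_sub_cancel]
      push_cast
      rw [← mul_assoc, hcoef_succ]; ring
    rw [hs'.tsum_eq_zero_add]
    simp only [Nat.cast_zero, zero_mul, mul_zero, zero_add, Nat.add_sub_cancel]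
    unfold hfun
    rw [← tsum_neg]
    refine tsum_congr fun m => ?_
    push_cast
    rw [← mul_assoc, hcoef_succ]; ring
  rw [e] at key
  exact key

lemma hfun_rec (μ : ℝ) (hμ : 0 ≤ μ) (x : ℝ) :
    hfun μ x = (μ + 1) * hfun (μ + 1) x - x * hfun (μ + 2) x := by
  have s0 := hsummable μ hμ x
  have s1 := hsummable (μ + 1) (by linarith) x
  have s2 := hsummable (μ + 2) (by linarith) x
  have c : ∀ m : ℕ, hcoef μ m = (μ + 1 + m) * hcoef (μ + 1) m := by
    intro m
    unfold hcoef
    have h : μ + 1 + m + 1 = (μ + m + 1) + 1 := by ring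
    have hp : 0 < μ + m + 1 := by positivity
    rw [h, Real.Gamma_add_one hp.ne']
    have := Real.Gamma_pos_of_pos hp
    have : (Nat.factorial m : ℝ) ≠ 0 := by positivity
    have h' : μ + 1 + m = μ + m + 1 := by ring
    rw [h']
    field_simp
  have e1 : hfun μ x = (μ + 1) * hfun (μ + 1) x + ∑' m : ℕ, (m : ℝ) * hcoef (μ + 1) m * x ^ m := by
    have s3 : Summable fun m : ℕ => (m : ℝ) * hcoef (μ + 1) m * x ^ m := by
      refine (s0.sub (s1.mul_left (μ + 1))).congr fun m => ?_
      rw [c]; ring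
    unfold hfun
    rw [← tsum_mul_left, ← (s1.mul_left (μ + 1)).tsum_add s3]
    refine tsum_congr fun m => ?_
    rw [c]; ring
  have e2 : ∑' m : ℕ, (m : ℝ) * hcoef (μ + 1) m * x ^ m = - (x * hfun (μ + 2) x) := by
    have c2 : ∀ m : ℕ, ((m + 1 : ℕ) : ℝ) * hcoef (μ + 1) (m + 1) * x ^ (m + 1) =
        -(x * (hcoef (μ + 2) m * x ^ m)) := by
      intro m
      have := hcoef_succ (μ + 1) m
      rw [show μ + 1 + 1 = μ + 2 by ring] at this
      push_cast
      rw [mul_comm ((m : ℝ) + 1), this]; ring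
    have s3 : Summable fun m : ℕ => (m : ℝ) * hcoef (μ + 1) m * x ^ m := by
      refine (s0.sub (s1.mul_left (μ + 1))).congr fun m => ?_
      rw [c]; ring
    rw [s3.tsum_eq_zero_add]
    simp only [c2]
    simp [hfun, tsum_neg, tsum_mul_left]
  rw [e1, e2]; ring

lemma besselJ_eq (ν z : ℝ) (hz : 0 < z) : besselJ ν z = jfun ν z := by
  unfold besselJ jfun hfun
  rw [← tsum_mul_left]
  refine tsum_congr fun m => ?_
  have h2 : 0 < z / 2 := by positivity
  rw [Real.rpow_add h2, Real.rpow_mul h2.le, Real.rpow_natCast]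
  have : (z / 2) ^ (2 : ℝ) = z ^ 2 / 4 := by
    rw [Real.rpow_two]; ring
  rw [this]; unfold hcoef; ring

lemma jfun_cont (ν : ℝ) (hν : 0 ≤ ν) : Continuous (jfun ν) := by
  have h : Continuous (hfun ν) :=
    continuous_iff_continuousAt.2 fun x => (hfun_deriv ν hν x).continuousAt
  unfold jfun
  refine Continuous.mul ?_ (h.comp (by fun_prop))
  exact (continuous_id.div_const 2).rpow_const (fun _ => Or.inr hν)

lemma jfun_deriv (ν : ℝ) (hν : 0 ≤ ν) (z : ℝ) (hz : 0 < z) :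
    HasDerivAt (jfun ν) (ν / z * jfun ν z - jfun (ν + 1) z) z := by
  have h2 : 0 < z / 2 := by positivity
  have d1 : HasDerivAt (fun z : ℝ => (z / 2) ^ ν) (1 / 2 * ν * (z / 2) ^ (ν - 1)) z :=
    ((hasDerivAt_id z).div_const 2).rpow_const (Or.inl h2.ne')
  have d2 : HasDerivAt (fun z : ℝ => z ^ 2 / 4) (z / 2) z := by
    refine ((hasDerivAt_pow 2 z).div_const 4).congr_deriv ?_
    norm_num; ring
  have d3 := d1.mul ((hfun_deriv ν hν (z ^ 2 / 4)).comp z d2)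
  refine d3.congr_deriv ?_
  unfold jfun
  rw [Real.rpow_sub_one h2.ne', Real.rpow_add_one h2.ne']
  simp only [Function.comp]
  field_simp
  ring

lemma jfun_deriv' (μ : ℝ) (hμ : 0 ≤ μ) (z : ℝ) (hz : 0 < z) :
    HasDerivAt (jfun (μ + 1)) (jfun μ z - (μ + 1) / z * jfun (μ + 1) z) z := by
  refine (jfun_deriv (μ + 1) (by linarith) z hz).congr_deriv ?_
  have h2 : 0 < z / 2 := by positivity
  unfold jfun
  rw [hfun_rec μ hμ, Real.rpow_add_one h2.ne', Real.rpow_add_one h2.ne',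
    show μ + 1 + 1 = μ + 2 by ring, Real.rpow_add_one h2.ne']
  field_simp
  ring

noncomputable def gfun (μ z : ℝ) : ℝ :=
  z ^ 2 * jfun μ z ^ 2 + z ^ 2 * jfun (μ + 1) z ^ 2
    - 2 * (μ + 1) * z * (jfun μ z * jfun (μ + 1) z)

lemma gfun_deriv (μ : ℝ) (hμ : 0 ≤ μ) (z : ℝ) (hz : 0 < z) :
    HasDerivAt (gfun μ) (2 * z * jfun (μ + 1) z ^ 2) z := by
  have du := jfun_deriv μ hμ z hz
  have dv := jfun_deriv' μ hμ z hz
  have dz := hasDerivAt_pow 2 z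
  have := ((dz.mul (du.pow 2)).add (dz.mul (dv.pow 2))).sub
    (((hasDerivAt_id z).const_mul (2 * (μ + 1))).mul (du.mul dv))
  refine this.congr_deriv ?_
  simp
  field_simp
  ring

lemma gfun_mono (μ : ℝ) (hμ : 0 ≤ μ) : MonotoneOn (gfun μ) (Set.Ici 0) := by
  have c1 := jfun_cont μ hμ
  have c2 := jfun_cont (μ + 1) (by linarith)
  refine monotoneOn_of_deriv_nonneg (convex_Ici 0) ?_ ?_ ?_
  · unfold gfun; fun_prop
  · intro z hz
    rw [interior_Ici] at hz
    exact (gfun_deriv μ hμ z hz).differentiableAt.differentiableWithinAt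
  · intro z hz
    rw [interior_Ici] at hz
    rw [(gfun_deriv μ hμ z hz).deriv]
    have : (0 : ℝ) < z := hz
    positivity

lemma gfun_zero (μ : ℝ) : gfun μ 0 = 0 := by simp [gfun]

lemma no_common (μ : ℝ) (hμ : 0 ≤ μ) (z : ℝ) (hz : 0 < z) (hu : jfun μ z = 0)
    (hv : jfun (μ + 1) z = 0) : False := by
  have g0 : gfun μ z = 0 := by simp [gfun, hu, hv]
  have hv0 : ∀ y ∈ Set.Ioo 0 z, hfun (μ + 1) (y ^ 2 / 4) = 0 := by
    intro y hy
    have hev : gfun μ =ᶠ[nhds y] fun _ => 0 := by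
      filter_upwards [isOpen_Ioo.mem_nhds hy] with w hw
      refine le_antisymm ?_ ?_
      · rw [← g0]; exact gfun_mono μ hμ hw.1.le hz.le hw.2.le
      · rw [← gfun_zero μ]; exact gfun_mono μ hμ Set.self_mem_Ici hw.1.le hw.1.le
    have h1 := (gfun_deriv μ hμ y hy.1).unique ((hasDerivAt_const y (0 : ℝ)).congr_of_eventuallyEq hev)
    have hy0 : y ≠ 0 := hy.1.ne'
    have h3 : jfun (μ + 1) y = 0 := by simpa [hy0] using h1
    unfold jfun at h3
    have : (y / 2) ^ (μ + 1) ≠ 0 := (Real.rpow_pos_of_pos (half_pos hy.1) _).ne'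
    exact (mul_eq_zero.1 h3).resolve_left this
  have hc : Continuous fun y : ℝ => hfun (μ + 1) (y ^ 2 / 4) := by
    have h : Continuous (hfun (μ + 1)) :=
      continuous_iff_continuousAt.2 fun x => (hfun_deriv (μ + 1) (by linarith) x).continuousAt
    exact h.comp (by fun_prop)
  have hcl : (0 : ℝ) ∈ closure (Set.Ioo 0 z) := by
    rw [closure_Ioo hz.ne]; exact ⟨le_rfl, hz.le⟩
  have h0 : hfun (μ + 1) ((0 : ℝ) ^ 2 / 4) = 0 :=
    closure_minimal (s := Set.Ioo 0 z) (t := {y | hfun (μ + 1) (y ^ 2 / 4) = 0}) hv0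
      (isClosed_eq hc continuous_const) hcl
  have h1 : hfun (μ + 1) 0 = hcoef (μ + 1) 0 := by
    unfold hfun
    rw [tsum_eq_single 0]
    · simp
    · intro m hm; simp [hm]
  rw [show (0 : ℝ) ^ 2 / 4 = 0 by norm_num, h1] at h0
  have : 0 < Real.Gamma (μ + 1 + 1) := Real.Gamma_pos_of_pos (by positivity)
  simp [hcoef, this.ne'] at h0

lemma wpos (μ : ℝ) (hμ : 0 ≤ μ) (z : ℝ) (hz : 0 < z) :
    0 < jfun μ z ^ 2 + jfun (μ + 1) z ^ 2 - (2 * μ + 1) / z * (jfun μ z * jfun (μ + 1) z) := by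
  have hg : 0 ≤ gfun μ z := by
    rw [← gfun_zero μ]; exact gfun_mono μ hμ Set.self_mem_Ici hz.le hz.le
  have hn := no_common μ hμ z hz
  unfold gfun at hg
  generalize jfun μ z = u at *
  generalize jfun (μ + 1) z = v at *
  have e : z ^ 2 * (u ^ 2 + v ^ 2 - (2 * μ + 1) / z * (u * v)) =
      (z ^ 2 * u ^ 2 + z ^ 2 * v ^ 2 - 2 * (μ + 1) * z * (u * v)) + z * (u * v) := by
    field_simp; ring
  rcases lt_trichotomy (u * v) 0 with h | h | h
  · have : 0 ≤ (2 * μ + 1) / z := by positivity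
    have hu : u ≠ 0 := by rintro rfl; simp at h
    have := mul_nonneg this (neg_pos.2 h).le
    have : 0 < u ^ 2 := by positivity
    nlinarith [sq_nonneg v]
  · rw [h, mul_zero, sub_zero]
    by_cases hu : u = 0
    · have hv : v ≠ 0 := fun hv => hn hu hv
      positivity
    · positivity
  · have : 0 < z ^ 2 * (u ^ 2 + v ^ 2 - (2 * μ + 1) / z * (u * v)) := by
      rw [e]; have := mul_pos hz h; linarith
    exact pos_of_mul_pos_right this (by positivity)

lemma rolle_aux (f g f' g' : ℝ → ℝ) (c d : ℝ) (hcd : c < d)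
    (hf : ∀ x ∈ Set.Icc c d, HasDerivAt f (f' x) x)
    (hg : ∀ x ∈ Set.Icc c d, HasDerivAt g (g' x) x)
    (hW : ∀ x ∈ Set.Icc c d, f' x * g x - f x * g' x ≠ 0)
    (h0 : ∀ x ∈ Set.Icc c d, g x ≠ 0) (hc : f c = 0) (hd : f d = 0) : False := by
  have hD : ∀ x ∈ Set.Icc c d,
      HasDerivAt (fun x => f x / g x) ((f' x * g x - f x * g' x) / g x ^ 2) x :=
    fun x hx => (hf x hx).div (hg x hx) (h0 x hx)
  obtain ⟨x, hx, hx0⟩ := exists_hasDerivAt_eq_zero (f := fun x => f x / g x) hcd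
    (fun x hx => (hD x hx).continuousAt.continuousWithinAt) (by simp [hc, hd])
    (fun x hx => hD x (Set.Ioo_subset_Icc_self hx))
  have hx' := Set.Ioo_subset_Icc_self hx
  exact div_ne_zero (hW x hx') (pow_ne_zero 2 (h0 x hx')) hx0

lemma sturm (f g f' g' : ℝ → ℝ) (a b : ℝ) (hab : a < b)
    (hf : ∀ x ∈ Set.Icc a b, HasDerivAt f (f' x) x)
    (hg : ∀ x ∈ Set.Icc a b, HasDerivAt g (g' x) x)
    (hW : ∀ x ∈ Set.Icc a b, f' x * g x - f x * g' x ≠ 0)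
    (ha : f a = 0) (hb : f b = 0) (h0 : ∀ x, a < x → x < b → f x ≠ 0) :
    ∃! z, z ∈ Set.Ioo a b ∧ g z = 0 := by
  have uniq : ∀ c d, c ∈ Set.Ioo a b → d ∈ Set.Ioo a b → c < d → g c = 0 → g d = 0 → False := by
    intro c d hc hd hcd gc gd
    have sub : ∀ x ∈ Set.Icc c d, x ∈ Set.Icc a b :=
      fun x hx => ⟨hc.1.le.trans hx.1, hx.2.trans hd.2.le⟩
    refine rolle_aux g f g' f' c d hcd (fun x hx => hg x (sub x hx)) (fun x hx => hf x (sub x hx))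
      (fun x hx h => hW x (sub x hx) (by linarith))
      (fun x hx => h0 x (hc.1.trans_le hx.1) (hx.2.trans_lt hd.2)) gc gd
  have ex : ∃ z, z ∈ Set.Ioo a b ∧ g z = 0 := by
    by_contra hne
    push Not at hne
    refine rolle_aux f g f' g' a b hab hf hg hW (fun x hx hgx => ?_) ha hb
    have w := hW x hx
    rcases hx.1.eq_or_lt with h | h
    · subst h; simp [ha, hgx] at w
    · rcases hx.2.eq_or_lt with h' | h'
      · subst h'; simp [hb, hgx] at w
      · exact hne x ⟨h, h'⟩ hgx
  obtain ⟨z, hz, gz⟩ := ex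
  refine ⟨z, ⟨hz, gz⟩, ?_⟩
  rintro y ⟨hy, gy⟩
  rcases lt_trichotomy y z with h | h | h
  · exact (uniq y z hy hz h gy gz).elim
  · exact h
  · exact (uniq z y hz hy h gz gy).elim

/-- For `ν ≥ 1`, between two consecutive positive zeroes of `J_{ν−1}` there is
exactly one zero of `J_{ν−1} − J_ν`, and conversely. -/
theorem stmt2 (ν : ℝ) (hν : 1 ≤ ν) :
    (∀ a b : ℝ, 0 < a → a < b → besselJ (ν - 1) a = 0 → besselJ (ν - 1) b = 0 →
      (∀ z : ℝ, a < z → z < b → besselJ (ν - 1) z ≠ 0) →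
      ∃! z : ℝ, z ∈ Set.Ioo a b ∧ besselJ (ν - 1) z - besselJ ν z = 0) ∧
    (∀ a b : ℝ, 0 < a → a < b →
      besselJ (ν - 1) a - besselJ ν a = 0 → besselJ (ν - 1) b - besselJ ν b = 0 →
      (∀ z : ℝ, a < z → z < b → besselJ (ν - 1) z - besselJ ν z ≠ 0) →
      ∃! z : ℝ, z ∈ Set.Ioo a b ∧ besselJ (ν - 1) z = 0) := by
  obtain ⟨μ, rfl⟩ : ∃ μ, ν = μ + 1 := ⟨ν - 1, by ring⟩
  have hμ : 0 ≤ μ := by linarith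
  rw [add_sub_cancel_right]
  have dU : ∀ z, 0 < z → HasDerivAt (besselJ μ) (μ / z * jfun μ z - jfun (μ + 1) z) z := by
    intro z hz
    refine (jfun_deriv μ hμ z hz).congr_of_eventuallyEq ?_
    filter_upwards [isOpen_Ioi.mem_nhds hz] with w hw using besselJ_eq _ _ hw
  have dV : ∀ z, 0 < z → HasDerivAt (besselJ (μ + 1))
      (jfun μ z - (μ + 1) / z * jfun (μ + 1) z) z := by
    intro z hz
    refine (jfun_deriv' μ hμ z hz).congr_of_eventuallyEq ?_
    filter_upwards [isOpen_Ioi.mem_nhds hz] with w hw using besselJ_eq _ _ hw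
  constructor
  · intro a b ha hab h1 h2 h3
    refine sturm (besselJ μ) (fun z => besselJ μ z - besselJ (μ + 1) z) _ _ a b hab
      (fun x hx => dU x (ha.trans_le hx.1))
      (fun x hx => (dU x (ha.trans_le hx.1)).sub (dV x (ha.trans_le hx.1))) ?_ h1 h2 h3
    intro x hx
    have hx0 := ha.trans_le hx.1
    have := (wpos μ hμ x hx0).ne'
    rw [besselJ_eq _ _ hx0, besselJ_eq _ _ hx0]
    convert this using 1
    field_simp; ring
  · intro a b ha hab h1 h2 h3
    refine sturm (fun z => besselJ μ z - besselJ (μ + 1) z) (besselJ μ) _ _ a b hab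
      (fun x hx => (dU x (ha.trans_le hx.1)).sub (dV x (ha.trans_le hx.1)))
      (fun x hx => dU x (ha.trans_le hx.1)) ?_ h1 h2 h3
    intro x hx
    have hx0 := ha.trans_le hx.1
    have := (neg_neg_of_pos (wpos μ hμ x hx0)).ne
    rw [besselJ_eq _ _ hx0, besselJ_eq _ _ hx0]
    convert this using 1
    field_simp; ring
end

section
/- Let ν be a real number with ν ≥ 1. For every integer k ≥ 1 one has j_{ν,k} < λ⁻_{ν−1,k+1} < j′_{ν,k+1} < j_{ν,k+1}. -/
open Set Filter Topology

noncomputable def bc (μ : ℝ) (m : ℕ) : ℝ := (-1 : ℝ) ^ m / (Nat.factorial m * Real.Gamma (μ + m + 1))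

noncomputable def bPhi (μ w : ℝ) : ℝ := ∑' m : ℕ, bc μ m * w ^ m

lemma bgamma_ge (μ : ℝ) (hμ : 0 ≤ μ) (m : ℕ) : Real.Gamma (μ + 1) ≤ Real.Gamma (μ + m + 1) := by
  induction m with
  | zero => simp
  | succ n ih =>
    have h1 : Real.Gamma (μ + (n + 1 : ℕ) + 1) = (μ + n + 1) * Real.Gamma (μ + n + 1) := by
      rw [← Real.Gamma_add_one (by positivity)]; push_cast; ring_nf
    have h2 : 0 < Real.Gamma (μ + n + 1) := Real.Gamma_pos_of_pos (by positivity)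
    rw [h1]
    have : (0:ℝ) ≤ n := by positivity
    nlinarith

lemma bc_bound (μ : ℝ) (hμ : 0 ≤ μ) (m : ℕ) :
    |bc μ m| ≤ (Real.Gamma (μ + 1))⁻¹ * ((m.factorial : ℝ))⁻¹ := by
  have h0 : 0 < Real.Gamma (μ + 1) := Real.Gamma_pos_of_pos (by positivity)
  have h := bgamma_ge μ hμ m
  have hf : (0:ℝ) < m.factorial := by exact_mod_cast m.factorial_pos
  have h2 : 0 < Real.Gamma (μ + m + 1) := lt_of_lt_of_le h0 h
  unfold bc
  rw [abs_div, abs_pow, abs_neg, abs_one, one_pow, abs_of_pos (by positivity), ← mul_inv, one_div]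
  apply inv_anti₀ (by positivity)
  nlinarith

lemma bc_succ (μ : ℝ) (hμ : 0 ≤ μ) (m : ℕ) : ((m + 1 : ℕ) : ℝ) * bc μ (m + 1) = - bc (μ + 1) m := by
  have h2 : 0 < Real.Gamma (μ + 1 + m + 1) := Real.Gamma_pos_of_pos (by positivity)
  have hf : (0:ℝ) < m.factorial := by exact_mod_cast m.factorial_pos
  unfold bc
  rw [show μ + ((m + 1 : ℕ):ℝ) + 1 = μ + 1 + m + 1 by push_cast; ring, Nat.factorial_succ]
  push_cast
  have : (m:ℝ) + 1 ≠ 0 := by positivity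
  field_simp
  ring

lemma bc_pred (ν : ℝ) (hν : 1 ≤ ν) (m : ℕ) : (ν + m) * bc ν m = bc (ν - 1) m := by
  have hp : 0 < ν + m := by positivity
  have h2 : 0 < Real.Gamma (ν + m) := Real.Gamma_pos_of_pos hp
  have hf : (0:ℝ) < m.factorial := by exact_mod_cast m.factorial_pos
  unfold bc
  rw [show ν - 1 + (m:ℝ) + 1 = ν + m by ring, Real.Gamma_add_one hp.ne']
  field_simp

lemma bsummable (μ : ℝ) (hμ : 0 ≤ μ) (w : ℝ) : Summable (fun m : ℕ => bc μ m * w ^ m) := by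
  have h : Summable (fun m : ℕ => (Real.Gamma (μ + 1))⁻¹ * (|w| ^ m / m.factorial)) :=
    (Real.summable_pow_div_factorial |w|).mul_left _
  refine Summable.of_norm_bounded h (fun m => ?_)
  rw [Real.norm_eq_abs, abs_mul, abs_pow]
  calc _ ≤ ((Real.Gamma (μ + 1))⁻¹ * ((m.factorial : ℝ))⁻¹) * |w| ^ m := by
        gcongr; exact bc_bound μ hμ m
    _ = _ := by ring

lemma bsum' (μ : ℝ) (hμ : 0 ≤ μ) (w : ℝ) :
    ∑' m : ℕ, bc μ m * (m * w ^ (m - 1)) = - bPhi (μ + 1) w := by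
  have hs := bsummable (μ + 1) (by positivity) w
  have key : ∀ m : ℕ, bc μ (m + 1) * ((m + 1 : ℕ) * w ^ (m + 1 - 1)) = - (bc (μ + 1) m * w ^ m) := by
    intro m
    have := bc_succ μ hμ m
    simp only [Nat.add_sub_cancel]
    linear_combination w ^ m * this
  have hs' : Summable (fun m : ℕ => bc μ (m + 1) * ((m + 1 : ℕ) * w ^ (m + 1 - 1))) := by
    simp_rw [key]; exact hs.neg
  have := (summable_nat_add_iff (f := fun m : ℕ => bc μ m * (m * w ^ (m - 1))) 1).1 hs'
  rw [this.tsum_eq_zero_add]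
  simp_rw [key]
  rw [tsum_neg]
  simp [bPhi]

lemma bPhi_deriv (μ : ℝ) (hμ : 0 ≤ μ) (w : ℝ) : HasDerivAt (bPhi μ) (- bPhi (μ + 1) w) w := by
  rw [← bsum' μ hμ w]
  set R := |w| + 1
  have hR : 0 < R := by positivity
  have hu : Summable (fun m : ℕ => (Real.Gamma (μ + 1))⁻¹ * ((m.factorial : ℝ))⁻¹ * (m * R ^ (m - 1))) := by
    refine (summable_nat_add_iff 1).1 ?_
    have h : Summable (fun m : ℕ => (Real.Gamma (μ + 1))⁻¹ * (R ^ m / m.factorial)) :=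
      (Real.summable_pow_div_factorial R).mul_left _
    refine h.congr (fun m => ?_)
    have hf : (0:ℝ) < m.factorial := by exact_mod_cast m.factorial_pos
    rw [Nat.factorial_succ]
    push_cast
    have : (m:ℝ) + 1 ≠ 0 := by positivity
    try simp only [Nat.add_sub_cancel]
    field_simp
  refine hasDerivAt_tsum_of_isPreconnected hu (t := Metric.ball 0 R) Metric.isOpen_ball
    (convex_ball _ _).isPreconnected (g := fun m w => bc μ m * w ^ m)
    (g' := fun m w => bc μ m * (m * w ^ (m - 1))) (y₀ := 0) ?_ ?_ ?_ ?_ ?_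
  · intro n y _
    exact (hasDerivAt_pow n y).const_mul _
  · intro n y hy
    rw [Real.norm_eq_abs, abs_mul, abs_mul, abs_pow, Nat.abs_cast]
    have : |y| ≤ R := by simpa using (Metric.mem_ball.1 hy).le
    gcongr
    exact bc_bound μ hμ n
  · simpa using hR
  · exact bsummable μ hμ 0
  · simp [R]

lemma bPhi_rec (ν : ℝ) (hν : 1 ≤ ν) (w : ℝ) :
    bPhi (ν - 1) w = ν * bPhi ν w - w * bPhi (ν + 1) w := by
  have h := bsum' ν (by linarith) w
  have hs1 := bsummable ν (by linarith) w
  have hs2 := bsummable (ν - 1) (by linarith) w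
  have : w * ∑' m : ℕ, bc ν m * (m * w ^ (m - 1)) = bPhi (ν - 1) w - ν * bPhi ν w := by
    unfold bPhi
    rw [← tsum_mul_left, ← tsum_mul_left, ← hs2.tsum_sub (hs1.mul_left ν)]
    congr 1; ext m
    rw [← bc_pred ν hν m]
    rcases m with _ | m
    · simp
    · simp only [Nat.add_sub_cancel]; ring
  rw [h] at this
  linarith

lemma bPhi_zero (μ : ℝ) (hμ : 0 ≤ μ) : 0 < bPhi μ 0 := by
  have h0 : 0 < Real.Gamma (μ + 1) := Real.Gamma_pos_of_pos (by positivity)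
  unfold bPhi
  rw [tsum_eq_single 0 (by intro m hm; simp [hm])]
  simp [bc, h0]

lemma besselJ_eq_s6 (μ z : ℝ) (hz : 0 < z) : besselJ μ z = (z / 2) ^ μ * bPhi μ (z ^ 2 / 4) := by
  unfold besselJ bPhi
  rw [← tsum_mul_left]
  congr 1; ext m
  rw [Real.rpow_add (by positivity), show (2 * (m:ℝ)) = ((2 * m : ℕ) : ℝ) by push_cast; ring,
    Real.rpow_natCast, pow_mul, show (z / 2) ^ 2 = z ^ 2 / 4 by ring]
  unfold bc; ring

lemma besselJ_deriv (μ z : ℝ) (hμ : 0 ≤ μ) (hz : 0 < z) :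
    HasDerivAt (besselJ μ) (μ / z * besselJ μ z - besselJ (μ + 1) z) z := by
  have h1 : HasDerivAt (fun z : ℝ => (z / 2) ^ μ * bPhi μ (z ^ 2 / 4))
      ((1 / 2 * μ * (z / 2) ^ (μ - 1)) * bPhi μ (z ^ 2 / 4)
        + (z / 2) ^ μ * (- bPhi (μ + 1) (z ^ 2 / 4) * (2 * z / 4))) z := by
    have ha : HasDerivAt (fun z : ℝ => (z / 2) ^ μ) (1 / 2 * μ * (z / 2) ^ (μ - 1)) z :=
      ((hasDerivAt_id z).div_const 2).rpow_const (Or.inl (by simp; positivity))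
    have hb : HasDerivAt (fun z : ℝ => z ^ 2 / 4) (2 * z / 4) z := by
      simpa using (hasDerivAt_pow 2 z).div_const 4
    have hc : HasDerivAt (fun z : ℝ => bPhi μ (z ^ 2 / 4)) (- bPhi (μ + 1) (z ^ 2 / 4) * (2 * z / 4)) z :=
      HasDerivAt.comp (h₂ := bPhi μ) z (bPhi_deriv μ hμ (z ^ 2 / 4)) hb
    exact ha.mul hc
  have h2 := h1.congr_of_eventuallyEq (f₁ := besselJ μ) (by
    filter_upwards [lt_mem_nhds hz] with y hy using besselJ_eq_s6 μ y hy)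
  refine h2.congr_deriv ?_
  rw [besselJ_eq_s6 μ z hz, besselJ_eq_s6 (μ + 1) z hz, Real.rpow_add_one (by positivity),
    Real.rpow_sub_one (by positivity)]
  field_simp
  ring

lemma besselJ_rec (ν z : ℝ) (hν : 1 ≤ ν) (hz : 0 < z) :
    besselJ (ν + 1) z = 2 * ν / z * besselJ ν z - besselJ (ν - 1) z := by
  rw [besselJ_eq_s6 _ z hz, besselJ_eq_s6 _ z hz, besselJ_eq_s6 _ z hz, Real.rpow_add_one (by positivity),
    Real.rpow_sub_one (by positivity), bPhi_rec ν hν]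
  field_simp
  ring

lemma besselJ_deriv_f (ν z : ℝ) (hν : 1 ≤ ν) (hz : 0 < z) :
    HasDerivAt (besselJ ν) (besselJ (ν - 1) z - ν / z * besselJ ν z) z := by
  convert besselJ_deriv ν z (by linarith) hz using 1
  rw [besselJ_rec ν z hν hz]; ring

lemma besselJ_deriv_A (ν z : ℝ) (hν : 1 ≤ ν) (hz : 0 < z) :
    HasDerivAt (besselJ (ν - 1)) ((ν - 1) / z * besselJ (ν - 1) z - besselJ ν z) z := by
  convert besselJ_deriv (ν - 1) z (by linarith) hz using 3
  ring

lemma besselJ_near (ν : ℝ) (hν : 1 ≤ ν) : ∀ᶠ z in 𝓝[>] (0:ℝ),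
    0 < besselJ ν z * (besselJ (ν - 1) z - ν / z * besselJ ν z) := by
  have c1 : Continuous (bPhi ν) := continuous_iff_continuousAt.2
    fun w => (bPhi_deriv ν (by linarith) w).continuousAt
  have c2 : Continuous (bPhi (ν + 1)) := continuous_iff_continuousAt.2
    fun w => (bPhi_deriv (ν + 1) (by linarith) w).continuousAt
  have p := bPhi_zero ν (by linarith)
  have e1 : ∀ᶠ z in 𝓝 (0:ℝ), 0 < bPhi ν (z ^ 2 / 4) := by
    have : Continuous (fun z : ℝ => bPhi ν (z ^ 2 / 4)) := by fun_prop
    exact this.continuousAt.eventually (lt_mem_nhds (by simpa using p))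
  have e2 : ∀ᶠ z in 𝓝 (0:ℝ), 0 < ν * bPhi ν (z ^ 2 / 4) - 2 * (z ^ 2 / 4) * bPhi (ν + 1) (z ^ 2 / 4) := by
    have : Continuous (fun z : ℝ => ν * bPhi ν (z ^ 2 / 4) - 2 * (z ^ 2 / 4) * bPhi (ν + 1) (z ^ 2 / 4)) := by
      fun_prop
    refine this.continuousAt.eventually (lt_mem_nhds ?_)
    simp; positivity
  filter_upwards [nhdsWithin_le_nhds e1, nhdsWithin_le_nhds e2, self_mem_nhdsWithin] with z h1 h2 hz
  have hz : 0 < z := hz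
  have : besselJ ν z * (besselJ (ν - 1) z - ν / z * besselJ ν z) =
    ((z / 2) ^ ν) ^ 2 / z * (bPhi ν (z ^ 2 / 4) *
      (ν * bPhi ν (z ^ 2 / 4) - 2 * (z ^ 2 / 4) * bPhi (ν + 1) (z ^ 2 / 4))) := by
    rw [besselJ_eq_s6 _ z hz, besselJ_eq_s6 _ z hz, Real.rpow_sub_one (by positivity), bPhi_rec ν hν]
    field_simp
    ring
  rw [this]
  positivity

lemma bneg_zero_unique (h h' : ℝ → ℝ) (a b : ℝ) (hd : ∀ z ∈ Ioo a b, HasDerivAt h (h' z) z)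
    (hn : ∀ z ∈ Ioo a b, h z = 0 → h' z < 0) (p q : ℝ) (hp : p ∈ Ioo a b) (hq : q ∈ Ioo a b)
    (h0 : h p = 0) (h1 : h q = 0) : ¬ p < q := by
  intro hpq
  have hsub : ∀ z ∈ Icc p q, z ∈ Ioo a b := fun z hz => ⟨hp.1.trans_le hz.1, hz.2.trans_lt hq.2⟩
  have hle : ∀ ⦃x⦄, x ∈ Icc p q → h x ≤ (fun _ => (0:ℝ)) x := by
    refine image_le_of_deriv_right_lt_deriv_boundary (f' := h') (B' := fun _ => 0) ?_ ?_ h0.le ?_ ?_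
    · exact fun z hz => (hd z (hsub z hz)).continuousAt.continuousWithinAt
    · exact fun z hz => (hd z (hsub z ⟨hz.1, hz.2.le⟩)).hasDerivWithinAt
    · exact fun x => hasDerivAt_const _ _
    · exact fun x hx hx0 => hn x (hsub x ⟨hx.1, hx.2.le⟩) hx0
  have hq' := hn q hq h1
  have ht := (hasDerivAt_iff_tendsto_slope_left_right.1 (hd q hq)).1
  have hge : 0 ≤ h' q := by
    refine ge_of_tendsto ht ?_
    filter_upwards [Ioo_mem_nhdsLT hpq] with y hy
    rw [slope_def_field, h1]
    have := hle ⟨hy.1.le, hy.2.le⟩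
    exact div_nonneg_of_nonpos (by simpa using this) (by linarith [hy.2])
  linarith

/-- Abstract system satisfied by `(J_ν, J_{ν-1})`. -/
structure BSys (ν : ℝ) (f A : ℝ → ℝ) : Prop where
  df : ∀ z, 0 < z → HasDerivAt f (A z - ν / z * f z) z
  dA : ∀ z, 0 < z → HasDerivAt A ((ν - 1) / z * A z - f z) z
  pos : ∀ z, 0 < z → z ≤ ν → 0 < f z * (A z - ν / z * f z)
  nz : ∀ z, ν ≤ z → f z = 0 → A z ≠ 0

lemma BSys.neg {ν : ℝ} {f A : ℝ → ℝ} (h : BSys ν f A) : BSys ν (fun z => - f z) (fun z => - A z) where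
  df z hz := by have := (h.df z hz).neg; exact this.congr_deriv (by ring)
  dA z hz := by have := (h.dA z hz).neg; exact this.congr_deriv (by ring)
  pos z hz hz' := by have := h.pos z hz hz'; linarith
  nz z hz hz' := by have := h.nz z hz; simp_all

lemma BSys.core {ν : ℝ} (hν : 1 ≤ ν) {f A : ℝ → ℝ} (h : BSys ν f A) (a b : ℝ) (ha : ν ≤ a) (hab : a < b)
    (hf : ∀ z ∈ Ioo a b, 0 < f z) (hb : f b = 0) (haz : f a = 0 ∨ (a = ν ∧ 0 < f a)) :
    ∃ p q, a < p ∧ p < q ∧ q < b ∧ (∀ z ∈ Ioo a b, A z - f z = 0 → z = p) ∧ A p - f p = 0 ∧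
      A q - ν / q * f q = 0 ∧
      (∀ z ∈ Ioo a b, A z - ν / z * f z = 0 → z = q) := by
  have pz : ∀ z, ν ≤ z → 0 < z := fun z hz => by linarith
  have hbn : A b < 0 := by
    refine lt_of_le_of_ne ?_ (h.nz b (by linarith) hb)
    have hd := h.df b (pz b (by linarith))
    rw [hb, mul_zero, sub_zero] at hd
    refine le_of_tendsto (hasDerivAt_iff_tendsto_slope_left_right.1 hd).1 ?_
    filter_upwards [Ioo_mem_nhdsLT hab] with y hy
    rw [slope_def_field, hb]
    have := hf y hy
    exact div_nonpos_of_nonneg_of_nonpos (by linarith) (by linarith [hy.2])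
  have hDa : 0 < A a - ν / a * f a ∧ 0 < A a - f a := by
    rcases haz with h0 | ⟨rfl, h0⟩
    · have hd := h.df a (pz a ha)
      rw [h0, mul_zero, sub_zero] at hd
      have : 0 < A a := by
        refine lt_of_le_of_ne ?_ (h.nz a ha h0).symm
        refine ge_of_tendsto (hasDerivAt_iff_tendsto_slope_left_right.1 hd).2 ?_
        filter_upwards [Ioo_mem_nhdsGT hab] with y hy
        rw [slope_def_field, h0]
        have := hf y hy
        exact div_nonneg (by linarith) (by linarith [hy.1])
      simpa [h0] using this
    · have := h.pos a (by linarith) le_rfl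
      have := (mul_pos_iff_of_pos_left h0).1 this
      refine ⟨this, ?_⟩
      rwa [div_self (by linarith), one_mul] at this
  have dD : ∀ z, 0 < z → HasDerivAt (fun z => A z - ν / z * f z)
      (((ν - 1) / z * A z - f z) - (-ν / z ^ 2 * f z + ν / z * (A z - ν / z * f z))) z := by
    intro z hz
    have h1 : HasDerivAt (fun z : ℝ => ν / z) (-ν / z ^ 2) z := by
      have := (hasDerivAt_const z ν).div (hasDerivAt_id z) hz.ne'
      exact this.congr_deriv (by simp)
    exact (h.dA z hz).sub (h1.mul (h.df z hz))
  have dg : ∀ z, 0 < z → HasDerivAt (fun z => A z - f z)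
      (((ν - 1) / z * A z - f z) - (A z - ν / z * f z)) z :=
    fun z hz => (h.dA z hz).sub (h.df z hz)
  have cD : ∀ z, ν ≤ z → ContinuousAt (fun z => A z - ν / z * f z) z :=
    fun z hz => (dD z (pz z hz)).continuousAt
  have cg : ∀ z, ν ≤ z → ContinuousAt (fun z => A z - f z) z :=
    fun z hz => (dg z (pz z hz)).continuousAt
  have uD := bneg_zero_unique _ _ a b (fun z hz => dD z (pz z (ha.trans hz.1.le))) (by
    intro z hz h0
    have hz0 := pz z (ha.trans hz.1.le)
    have hzν : ν < z := ha.trans_lt hz.1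
    have hfz := hf z hz
    try simp only at h0
    have hA : A z = ν / z * f z := by linarith
    rw [hA]
    have : (ν - 1) / z * (ν / z * f z) - f z - (-ν / z ^ 2 * f z + ν / z * (ν / z * f z - ν / z * f z))
      = f z * (ν ^ 2 - z ^ 2) / z ^ 2 := by field_simp; ring
    rw [this]
    exact div_neg_of_neg_of_pos (mul_neg_of_pos_of_neg hfz (by nlinarith)) (by positivity))
  have ug := bneg_zero_unique _ _ a b (fun z hz => dg z (pz z (ha.trans hz.1.le))) (by
    intro z hz h0
    have hz0 := pz z (ha.trans hz.1.le)
    have hzν : ν < z := ha.trans_lt hz.1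
    have hfz := hf z hz
    try simp only at h0
    have hA : A z = f z := by linarith
    rw [hA]
    have : (ν - 1) / z * f z - f z - (f z - ν / z * f z)
      = f z * (2 * ν - 1 - 2 * z) / z := by field_simp; ring
    rw [this]
    exact div_neg_of_neg_of_pos (mul_neg_of_pos_of_neg hfz (by linarith)) (by positivity))
  obtain ⟨p, hp, hp0⟩ := intermediate_value_Ioo' hab.le
    (f := fun z => A z - f z) (fun z hz => (cg z (ha.trans hz.1)).continuousWithinAt)
    (show (0:ℝ) ∈ Ioo _ _ from ⟨by linarith, hDa.2⟩)
  try simp only at hp0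
  have hpD : 0 < A p - ν / p * f p := by
    have hfp := hf p hp
    have hpν : ν < p := ha.trans_lt hp.1
    have : A p = f p := by linarith
    rw [this]
    have : ν / p < 1 := (div_lt_one (by linarith)).2 hpν
    nlinarith
  obtain ⟨q, hq, hq0⟩ := intermediate_value_Ioo' hp.2.le
    (f := fun z => A z - ν / z * f z) (fun z hz => (cD z (by linarith [hz.1, hp.1])).continuousWithinAt)
    (show (0:ℝ) ∈ Ioo _ _ from ⟨by rw [hb]; linarith, hpD⟩)
  try simp only at hq0
  have hq' : q ∈ Ioo a b := ⟨hp.1.trans hq.1, hq.2⟩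
  refine ⟨p, q, hp.1, hq.1, hq.2, ?_, hp0, hq0, ?_⟩
  · intro z hz h0
    exact le_antisymm (not_lt.1 (ug p z hp hz hp0 h0)) (not_lt.1 (ug z p hz hp h0 hp0))
  · intro z hz h0
    exact le_antisymm (not_lt.1 (uD q z hq' hz hq0 h0)) (not_lt.1 (uD z q hz hq' h0 hq0))

lemma bsign {f : ℝ → ℝ} {s : Set ℝ} (hs : IsPreconnected s) (hc : ContinuousOn f s)
    (hz : ∀ z ∈ s, f z ≠ 0) : (∀ z ∈ s, 0 < f z) ∨ (∀ z ∈ s, f z < 0) := by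
  by_contra hcon
  push Not at hcon
  obtain ⟨⟨x, hx, hx0⟩, ⟨y, hy, hy0⟩⟩ := hcon
  obtain ⟨c, hc, hc0⟩ := hs.intermediate_value hx hy hc ⟨hx0, hy0⟩
  exact hz c hc hc0

lemma BSys.core' {ν : ℝ} (hν : 1 ≤ ν) {f A : ℝ → ℝ} (h : BSys ν f A) (a b : ℝ) (ha : ν ≤ a) (hab : a < b)
    (hf : ∀ z ∈ Ioo a b, f z ≠ 0) (hb : f b = 0) (haz : f a = 0 ∨ a = ν) :
    ∃ p q, a < p ∧ p < q ∧ q < b ∧ (∀ z ∈ Ioo a b, A z - f z = 0 → z = p) ∧ A p - f p = 0 ∧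
      A q - ν / q * f q = 0 ∧
      (∀ z ∈ Ioo a b, A z - ν / z * f z = 0 → z = q) := by
  have hc : ∀ z, ν ≤ z → ContinuousAt f z := fun z hz => (h.df z (by linarith)).continuousAt
  have key : ((∀ z ∈ Ioo a b, 0 < f z) ∧ (f a = 0 ∨ (a = ν ∧ 0 < f a))) ∨
      ((∀ z ∈ Ioo a b, f z < 0) ∧ (f a = 0 ∨ (a = ν ∧ f a < 0))) := by
    by_cases h0 : f a = 0
    · rcases bsign isPreconnected_Ioo (fun z hz => (hc z (ha.trans hz.1.le)).continuousWithinAt) hf with h1 | h1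
      · exact Or.inl ⟨h1, Or.inl h0⟩
      · exact Or.inr ⟨h1, Or.inl h0⟩
    · have haν : a = ν := haz.resolve_left h0
      have hf' : ∀ z ∈ Ico a b, f z ≠ 0 := by
        intro z hz
        rcases hz.1.eq_or_lt with rfl | h2
        · exact h0
        · exact hf z ⟨h2, hz.2⟩
      rcases bsign isPreconnected_Ico (fun z hz => (hc z (ha.trans hz.1)).continuousWithinAt) hf' with h1 | h1
      · exact Or.inl ⟨fun z hz => h1 z ⟨hz.1.le, hz.2⟩, Or.inr ⟨haν, h1 a ⟨le_rfl, hab⟩⟩⟩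
      · exact Or.inr ⟨fun z hz => h1 z ⟨hz.1.le, hz.2⟩, Or.inr ⟨haν, h1 a ⟨le_rfl, hab⟩⟩⟩
  rcases key with ⟨h1, h2⟩ | ⟨h1, h2⟩
  · exact h.core hν a b ha hab h1 hb h2
  · obtain ⟨p, q, k1, k2, k3, k4, k5, k6, k7⟩ := h.neg.core hν a b ha hab
      (fun z hz => by have := h1 z hz; linarith) (by simp [hb])
      (by rcases h2 with h2 | ⟨h2, h3⟩
          · left; simp [h2]
          · right; exact ⟨h2, by linarith⟩)
    refine ⟨p, q, k1, k2, k3, fun z hz h0 => k4 z hz (by linarith), by linarith, by linarith,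
      fun z hz h0 => k7 z hz (by linarith)⟩

lemma besselSys (ν : ℝ) (hν : 1 ≤ ν) : BSys ν (besselJ ν) (besselJ (ν - 1)) := by
  set f := besselJ ν
  set A := besselJ (ν - 1)
  have df : ∀ z, 0 < z → HasDerivAt f (A z - ν / z * f z) z := fun z hz => besselJ_deriv_f ν z hν hz
  have dA : ∀ z, 0 < z → HasDerivAt A ((ν - 1) / z * A z - f z) z := fun z hz => besselJ_deriv_A ν z hν hz
  have pos : ∀ z, 0 < z → z ≤ ν → 0 < f z * (A z - ν / z * f z) := by
    intro z hz hzν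
    obtain ⟨y, hy, hyz⟩ := ((besselJ_near ν hν).and (Ioo_mem_nhdsGT hz)).exists
    have hy0 := hyz.1
    have dP : ∀ t ∈ Ioi (0:ℝ), HasDerivAt (fun t => f t * (t * A t - ν * f t))
        ((A t - ν / t * f t) * (t * A t - ν * f t) +
          f t * ((1 * A t + t * ((ν - 1) / t * A t - f t)) - ν * (A t - ν / t * f t))) t :=
      fun t ht => (df t ht).mul (((hasDerivAt_id t).mul (dA t ht)).sub ((df t ht).const_mul ν))
    have hm : MonotoneOn (fun t => f t * (t * A t - ν * f t)) (Icc y z) := by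
      refine monotoneOn_of_deriv_nonneg (convex_Icc _ _) ?_ ?_ ?_
      · exact fun t ht => (dP t (hy0.trans_le ht.1)).continuousAt.continuousWithinAt
      · intro t ht
        rw [interior_Icc] at ht
        exact (dP t (hy0.trans ht.1)).differentiableAt.differentiableWithinAt
      · intro t ht
        rw [interior_Icc] at ht
        have ht0 : 0 < t := hy0.trans ht.1
        rw [(dP t ht0).deriv]
        have : (A t - ν / t * f t) * (t * A t - ν * f t) +
          f t * ((1 * A t + t * ((ν - 1) / t * A t - f t)) - ν * (A t - ν / t * f t)) =
          ((t * A t - ν * f t) ^ 2 + (ν ^ 2 - t ^ 2) * f t ^ 2) / t := by field_simp; ring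
        rw [this]
        have : 0 ≤ ν ^ 2 - t ^ 2 := by nlinarith [ht.2]
        positivity
    have h1 := hm ⟨le_rfl, hyz.2.le⟩ ⟨hyz.2.le, le_rfl⟩ hyz.2.le
    try simp only at h1
    have e : ∀ t, 0 < t → f t * (t * A t - ν * f t) = t * (f t * (A t - ν / t * f t)) := by
      intro t ht; field_simp
    rw [e y hy0, e z hz] at h1
    exact pos_of_mul_pos_right (lt_of_lt_of_le (mul_pos hy0 hy) h1) hz.le
  refine ⟨df, dA, pos, ?_⟩
  intro z hz hf0 hA0
  have hν0 : 0 < ν := by linarith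
  have dE : ∀ t, 0 < t → HasDerivAt (fun t => t ^ (2 * ν) * (f t ^ 2 + A t ^ 2))
      ((2 * ν * t ^ (2 * ν - 1)) * (f t ^ 2 + A t ^ 2) + t ^ (2 * ν) *
        (2 * f t * (A t - ν / t * f t) + 2 * A t * ((ν - 1) / t * A t - f t))) t := by
    intro t ht
    have h1 := (df t ht).pow 2
    have h2 := (dA t ht).pow 2
    have h3 := Real.hasDerivAt_rpow_const (p := 2 * ν) (Or.inl ht.ne')
    exact (h3.mul (h1.add h2)).congr_deriv (by simp)
  have hm : MonotoneOn (fun t => t ^ (2 * ν) * (f t ^ 2 + A t ^ 2)) (Icc ν z) := by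
    refine monotoneOn_of_deriv_nonneg (convex_Icc _ _) ?_ ?_ ?_
    · exact fun t ht => (dE t (hν0.trans_le ht.1)).continuousAt.continuousWithinAt
    · intro t ht
      rw [interior_Icc] at ht
      exact (dE t (hν0.trans ht.1)).differentiableAt.differentiableWithinAt
    · intro t ht
      rw [interior_Icc] at ht
      have ht0 : 0 < t := hν0.trans ht.1
      rw [(dE t ht0).deriv, Real.rpow_sub_one ht0.ne']
      have : 2 * ν * (t ^ (2 * ν) / t) * (f t ^ 2 + A t ^ 2) + t ^ (2 * ν) *
        (2 * f t * (A t - ν / t * f t) + 2 * A t * ((ν - 1) / t * A t - f t)) =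
        t ^ (2 * ν) / t * ((4 * ν - 2) * A t ^ 2) := by field_simp; ring
      rw [this]
      have : 0 ≤ 4 * ν - 2 := by linarith
      positivity
  have h1 := hm ⟨le_rfl, hz⟩ ⟨hz, le_rfl⟩ hz
  have h4 : z ^ (2 * ν) * (f z ^ 2 + A z ^ 2) = 0 := by rw [hf0, hA0]; ring
  have h1 : ν ^ (2 * ν) * (f ν ^ 2 + A ν ^ 2) ≤ z ^ (2 * ν) * (f z ^ 2 + A z ^ 2) := h1
  have h2 := pos ν hν0 le_rfl
  have h3 : f ν ≠ 0 := by intro h; simp [h] at h2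
  have : 0 < ν ^ (2 * ν) * (f ν ^ 2 + A ν ^ 2) := by positivity
  linarith

lemma benum {g : ℝ → ℝ} {y X : ℕ → ℝ} (hy : EnumPosZeros g y) (hX0 : 0 < X 0) (hmono : ∀ k, X k < X (k + 1))
    (hsmall : ∀ z, 0 < z → z ≤ X 0 → g z ≠ 0) (hX : ∀ k, g (X k) ≠ 0)
    (hu : ∀ k, ∃ p, X k < p ∧ p < X (k + 1) ∧ g p = 0 ∧ ∀ z ∈ Ioo (X k) (X (k + 1)), g z = 0 → z = p)
    (k : ℕ) : X k < y (k + 1) ∧ y (k + 1) < X (k + 1) := by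
  obtain ⟨h1, h2, h3⟩ := hy
  have hXp : ∀ k, 0 < X k := fun k => hX0.trans_le (monotone_nat_of_le_succ (fun k => (hmono k).le) (Nat.zero_le k))
  induction k with
  | zero =>
    obtain ⟨p, p1, p2, p3, p4⟩ := hu 0
    obtain ⟨m, hm, rfl⟩ := h3 p (hX0.trans p1) p3
    refine ⟨?_, ?_⟩
    · by_contra hc
      exact hsmall _ (h2 1 le_rfl).1 (not_lt.1 hc) (h2 1 le_rfl).2
    · exact lt_of_le_of_lt (h1.monotoneOn (by simp) hm hm) p2
  | succ k ih =>
    have hlt : y (k + 1) < y (k + 1 + 1) := h1 (by simp) (by simp) (by omega)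
    have hgt : X (k + 1) < y (k + 1 + 1) := by
      by_contra hc
      rcases (not_lt.1 hc).eq_or_lt with he | hl
      · exact hX (k + 1) (he ▸ (h2 (k + 1 + 1) (by omega)).2)
      · obtain ⟨p, p1, p2, p3, p4⟩ := hu k
        have e1 := p4 _ ih (h2 (k + 1) (by omega)).2
        have e2 := p4 _ ⟨ih.1.trans hlt, hl⟩ (h2 (k + 1 + 1) (by omega)).2
        linarith
    refine ⟨hgt, ?_⟩
    obtain ⟨p, p1, p2, p3, p4⟩ := hu (k + 1)
    obtain ⟨m, hm, rfl⟩ := h3 p ((hXp _).trans p1) p3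
    have : y (k + 1) < y m := ih.2.trans p1
    have : k + 1 < m := (h1.lt_iff_lt (by simp) hm).1 this
    exact lt_of_le_of_lt (h1.monotoneOn (by simp) hm (by omega)) p2

theorem stmt6 (ν : ℝ) (hν : 1 ≤ ν) (k : ℕ) (hk : 1 ≤ k)
    (jn jpn lam : ℕ → ℝ)
    (hjn : EnumPosZeros (besselJ ν) jn)
    (hjpn : EnumPosZeros (deriv (besselJ ν)) jpn)
    (hlam : EnumPosZeros (fun z => besselJ (ν - 1) z - besselJ ν z) lam) :
    jn k < lam (k + 1) ∧ lam (k + 1) < jpn (k + 1) ∧ jpn (k + 1) < jn (k + 1) := by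
  have S := besselSys ν hν
  have hν0 : 0 < ν := by linarith
  have hder : ∀ z, 0 < z → deriv (besselJ ν) z = besselJ (ν - 1) z - ν / z * besselJ ν z :=
    fun z hz => (S.df z hz).deriv
  obtain ⟨h1, h2, h3⟩ := hjn
  have hjν : ∀ k, 1 ≤ k → ν < jn k := by
    intro k hk
    by_contra hc
    have := S.pos _ (h2 k hk).1 (not_lt.1 hc)
    simp [(h2 k hk).2] at this
  let X : ℕ → ℝ := fun k => if k = 0 then ν else jn k
  have hX0 : X 0 = ν := rfl
  have hXs : ∀ k, X (k + 1) = jn (k + 1) := fun k => rfl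
  have hmono : ∀ k, X k < X (k + 1) := by
    intro k
    rcases k with _ | k
    · exact hjν 1 le_rfl
    · exact h1 (by simp) (by simp) (by omega)
  have hXν : ∀ k, ν ≤ X k := by
    intro k
    rcases k with _ | k
    · exact le_rfl
    · exact (hjν _ (by omega)).le
  have hcore := fun k => S.core' hν (X k) (X (k + 1)) (hXν k) (hmono k) (by
      intro z hz h0
      obtain ⟨m, hm, rfl⟩ := h3 z (by linarith [hXν k, hz.1]) h0
      have hm2 : m < k + 1 := (h1.lt_iff_lt hm (by simp)).1 hz.2
      rcases k with _ | k
      · omega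
      · have hm1 : k + 1 < m := (h1.lt_iff_lt (by simp) hm).1 hz.1
        omega) (h2 (k + 1) (by omega)).2 (by
      rcases k with _ | k
      · right; rfl
      · left; exact (h2 (k + 1) (by omega)).2)
  have hsg : ∀ z, 0 < z → z ≤ ν → besselJ (ν - 1) z - besselJ ν z ≠ 0 := by
    intro z hz hzν h0
    have hp := S.pos z hz hzν
    have e : besselJ (ν - 1) z = besselJ ν z := by linarith
    rw [e] at hp
    have : 1 ≤ ν / z := (one_le_div hz).2 hzν
    nlinarith [sq_nonneg (besselJ ν z)]
  have hsD : ∀ z, 0 < z → z ≤ ν → deriv (besselJ ν) z ≠ 0 := by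
    intro z hz hzν h0
    have hp := S.pos z hz hzν
    rw [hder z hz] at h0
    simp [h0] at hp
  have hL := benum hlam (X := X) hν0 hmono hsg (by
    intro k
    rcases k with _ | k
    · exact hsg ν hν0 le_rfl
    · have := (h2 (k + 1) (by omega)).2
      simp only [hXs, this, sub_zero]
      exact S.nz _ (hXν (k + 1)) this) (by
    intro k
    obtain ⟨p, q, k1, k2, k3, k4, k5, k6, k7⟩ := hcore k
    exact ⟨p, k1, k2.trans k3, k5, k4⟩) k
  have hD := benum hjpn (X := X) hν0 hmono hsD (by
    intro k
    rcases k with _ | k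
    · exact hsD ν hν0 le_rfl
    · have := (h2 (k + 1) (by omega)).2
      rw [hder _ (by linarith [hXν (k + 1)])]
      simp only [hXs, this, sub_zero, mul_zero]
      exact S.nz _ (hXν (k + 1)) this) (by
    intro k
    obtain ⟨p, q, k1, k2, k3, k4, k5, k6, k7⟩ := hcore k
    have := hXν k
    refine ⟨q, k1.trans k2, k3, ?_, ?_⟩
    · rw [hder _ (by linarith)]; exact k6
    · intro z hz h0
      rw [hder _ (by linarith [hz.1])] at h0
      exact k7 z hz h0) k
  obtain ⟨p, q, k1, k2, k3, k4, k5, k6, k7⟩ := hcore k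
  have e1 := k4 _ hL (hlam.2.1 (k + 1) (by omega)).2
  have e2 := k7 _ hD (by
    have := hjpn.2.1 (k + 1) (by omega)
    rw [← hder _ this.1]; exact this.2)
  have hXk : X k = jn k := by simp [X]; omega
  refine ⟨hXk ▸ hL.1, ?_, hD.2⟩
  rw [e1, e2]; exact k2
end

section
/- Let ν be a real number with ν ≥ 1. For every integer k ≥ 1 one has λ⁻_{ν,k+1} < λ⁻_{ν−1,k+2} < λ⁻_{ν,k+2}, where λ⁻_{ν,m} denotes the m-th positive zero of z ↦ J_ν(z) − J_{ν+1}(z) and λ⁻_{ν−1,m} the m-th positive zero of z ↦ J_{ν−1}(z) − J_ν(z); that is, the positive zeroes of the differences of Bessel functions of consecutive orders interlace. -/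
open Filter Topology Set

noncomputable def cB (μ : ℝ) (m : ℕ) : ℝ := (-1 : ℝ) ^ m / (Nat.factorial m * Real.Gamma (μ + m + 1))

noncomputable def HB (μ t : ℝ) : ℝ := ∑' m : ℕ, cB μ m * t ^ m

lemma gamma_lb {μ : ℝ} (hμ : 0 ≤ μ) (m : ℕ) : Real.Gamma (μ + 1) ≤ Real.Gamma (μ + m + 1) := by
  induction m with
  | zero => simp
  | succ n ih =>
    have hn : (0 : ℝ) ≤ n := Nat.cast_nonneg n
    have h1 : Real.Gamma (μ + (n + 1 : ℕ) + 1) = (μ + n + 1) * Real.Gamma (μ + n + 1) := by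
      rw [← Real.Gamma_add_one (by positivity)]; push_cast; ring_nf
    rw [h1]
    have := Real.Gamma_pos_of_pos (show 0 < μ + n + 1 by positivity)
    nlinarith

lemma cB_bound {μ : ℝ} (hμ : 0 ≤ μ) (m : ℕ) : |cB μ m| ≤ (Real.Gamma (μ + 1))⁻¹ * (1 / (Nat.factorial m : ℝ)) := by
  have h0 := Real.Gamma_pos_of_pos (show 0 < μ + 1 by positivity)
  have h1 := gamma_lb hμ m
  have h2 : (0 : ℝ) < Nat.factorial m := by positivity
  have h3 : 0 < Real.Gamma (μ + m + 1) := by linarith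
  rw [cB, abs_div, abs_pow, abs_neg, abs_one, one_pow, abs_of_pos (by positivity), ← one_div, one_div_mul_one_div]
  apply one_div_le_one_div_of_le (by positivity)
  nlinarith

lemma cB_succ {μ : ℝ} (hμ : 0 ≤ μ) (m : ℕ) : cB μ (m + 1) * (m + 1 : ℕ) = - cB (μ + 1) m := by
  have h3 : 0 < Real.Gamma (μ + 1 + m + 1) := Real.Gamma_pos_of_pos (by positivity)
  have h2 : (Nat.factorial m : ℝ) ≠ 0 := by positivity
  have h4 : (m : ℝ) + 1 ≠ 0 := by positivity
  unfold cB
  rw [show μ + ((m + 1 : ℕ) : ℝ) + 1 = μ + 1 + m + 1 by push_cast; ring, Nat.factorial_succ]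
  push_cast
  field_simp
  ring

lemma HB_summable {μ : ℝ} (hμ : 0 ≤ μ) (t : ℝ) : Summable (fun m : ℕ => cB μ m * t ^ m) := by
  apply Summable.of_norm_bounded (g := fun m : ℕ => (Real.Gamma (μ + 1))⁻¹ * (|t| ^ m / (Nat.factorial m : ℝ)))
  · exact (Real.summable_pow_div_factorial |t|).mul_left _
  · intro m
    rw [Real.norm_eq_abs, abs_mul, abs_pow]
    calc _ ≤ ((Real.Gamma (μ + 1))⁻¹ * (1 / (Nat.factorial m : ℝ))) * |t| ^ m :=
          mul_le_mul_of_nonneg_right (cB_bound hμ m) (by positivity)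
      _ = _ := by ring

lemma HB_deriv {μ : ℝ} (hμ : 0 ≤ μ) (t : ℝ) : HasDerivAt (HB μ) (- HB (μ + 1) t) t := by
  set R := |t| + 1 with hR
  have hR0 : 0 ≤ R := by positivity
  have key := hasDerivAt_tsum_of_isPreconnected (𝕜 := ℝ) (F := ℝ)
    (g := fun m : ℕ => fun y : ℝ => cB μ m * y ^ m)
    (g' := fun m : ℕ => fun y : ℝ => cB μ m * (m * y ^ (m - 1)))
    (u := fun m : ℕ => |cB μ m| * (m * R ^ (m - 1)))
    (t := Metric.ball (0 : ℝ) R) (y₀ := t) (y := t) ?_ Metric.isOpen_ball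
    (convex_ball (0 : ℝ) R).isPreconnected ?_ ?_ ?_ (HB_summable hμ t) ?_
  · have e : ∑' m : ℕ, cB μ m * (m * t ^ (m - 1)) = - HB (μ + 1) t := by
      have hs : Summable (fun m : ℕ => cB μ m * (m * t ^ (m - 1))) := by
        rw [← summable_nat_add_iff 1]
        have := (HB_summable (show 0 ≤ μ + 1 by linarith) t).neg
        refine this.congr (fun m => ?_)
        rw [← mul_assoc, cB_succ hμ]; simp
      rw [hs.tsum_eq_zero_add, HB, ← tsum_neg]
      simp only [Nat.cast_zero, zero_mul, mul_zero, zero_add]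
      refine tsum_congr (fun m => ?_)
      rw [← mul_assoc, cB_succ hμ]; simp
    rw [e] at key
    exact key
  · rw [← summable_nat_add_iff 1]
    have := ((HB_summable (show 0 ≤ μ + 1 by linarith) R).abs)
    refine this.congr (fun m => ?_)
    have : |cB μ (m+1)| * ((m + 1 : ℕ) : ℝ) = |cB (μ + 1) m| := by
      rw [← abs_neg (cB (μ+1) m), ← cB_succ hμ, abs_mul, Nat.abs_cast]
    rw [← mul_assoc, this, abs_mul, abs_of_nonneg (pow_nonneg hR0 m)]; simp
  · intro m y _
    exact (hasDerivAt_pow m y).const_mul _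
  · intro m y hy
    rw [Real.norm_eq_abs, abs_mul, abs_mul, abs_pow, Nat.abs_cast]
    have : |y| ≤ R := by
      have := mem_ball_zero_iff.1 hy
      rw [Real.norm_eq_abs] at this; exact this.le
    gcongr
  · simp [hR]
  · simp [hR]

lemma HB_rec {μ : ℝ} (hμ : 1 ≤ μ) (t : ℝ) : HB (μ - 1) t + t * HB (μ + 1) t = μ * HB μ t := by
  have s0 := HB_summable (show 0 ≤ μ - 1 by linarith) t
  have s1 := HB_summable (show 0 ≤ μ by linarith) t
  have s2 := HB_summable (show 0 ≤ μ + 1 by linarith) t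
  have hc : ∀ m : ℕ, cB (μ - 1) m = μ * cB μ m + m * cB μ m := by
    intro m
    have h3 : 0 < Real.Gamma (μ + m) := Real.Gamma_pos_of_pos (by positivity)
    have h2 : (Nat.factorial m : ℝ) ≠ 0 := by positivity
    have h4 : μ + (m : ℝ) ≠ 0 := by positivity
    unfold cB
    rw [show μ - 1 + (m : ℝ) + 1 = μ + m by ring, Real.Gamma_add_one h4]
    field_simp
  have e : (fun m : ℕ => (m : ℝ) * cB μ m * t ^ m) = fun m : ℕ => cB (μ - 1) m * t ^ m - μ * (cB μ m * t ^ m) := by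
    funext m; rw [hc]; ring
  have s3 : Summable (fun m : ℕ => (m : ℝ) * cB μ m * t ^ m) := by
    rw [e]; exact s0.sub (s1.mul_left _)
  have h4 : ∑' m : ℕ, (m : ℝ) * cB μ m * t ^ m = HB (μ - 1) t - μ * HB μ t := by
    rw [e, s0.tsum_sub (s1.mul_left _), tsum_mul_left]; rfl
  have h5 : ∑' m : ℕ, (m : ℝ) * cB μ m * t ^ m = - (t * HB (μ + 1) t) := by
    rw [s3.tsum_eq_zero_add, HB, ← tsum_mul_left, ← tsum_neg]
    simp only [Nat.cast_zero, zero_mul, zero_add]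
    refine tsum_congr (fun m => ?_)
    rw [mul_comm _ (cB μ _), cB_succ (by linarith)]; ring
  linarith

lemma HB_zero_pos {μ : ℝ} (hμ : 0 ≤ μ) : 0 < HB μ 0 := by
  have : HB μ 0 = cB μ 0 := by
    rw [HB, tsum_eq_single 0]
    · simp
    · intro m hm; simp [hm]
  rw [this, cB]
  have := Real.Gamma_pos_of_pos (show 0 < μ + 1 by positivity)
  simpa using this

lemma J_eq {μ z : ℝ} (hμ : 0 ≤ μ) (hz : 0 ≤ z) : besselJ μ z = (z / 2) ^ μ * HB μ ((z / 2) ^ 2) := by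
  rw [besselJ, HB, ← tsum_mul_left]
  refine tsum_congr (fun m => ?_)
  rw [Real.rpow_add_of_nonneg (by positivity) hμ (by positivity), cB, ← pow_mul]
  have : (z / 2) ^ (2 * (m : ℝ)) = (z / 2) ^ (2 * m) := by
    rw [← Real.rpow_natCast]; push_cast; rfl
  rw [this]; ring

lemma J_cont {μ : ℝ} (hμ : 0 ≤ μ) : ContinuousOn (besselJ μ) (Ici 0) := by
  have hH : Continuous (HB μ) := continuous_iff_continuousAt.2 fun t => (HB_deriv hμ t).continuousAt
  have : Continuous (fun z : ℝ => (z / 2) ^ μ * HB μ ((z / 2) ^ 2)) := by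
    apply Continuous.mul
    · exact Continuous.rpow_const (by fun_prop) (fun _ => Or.inr hμ)
    · exact hH.comp (by fun_prop)
  exact this.continuousOn.congr fun z hz => J_eq hμ hz

lemma J_deriv {μ z : ℝ} (hμ : 0 ≤ μ) (hz : 0 < z) :
    HasDerivAt (besselJ μ) (μ / z * besselJ μ z - besselJ (μ + 1) z) z := by
  have h1 : HasDerivAt (fun z : ℝ => z / 2) (1 / 2) z := (hasDerivAt_id z).div_const 2
  have hz2 : 0 < z / 2 := by positivity
  have h2 := h1.rpow_const (p := μ) (Or.inl hz2.ne')
  have h3 := (HB_deriv hμ ((z / 2) ^ 2)).comp z (h1.pow 2)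
  have h4 := h2.mul h3
  have h5 : HasDerivAt (besselJ μ) _ z := h4.congr_of_eventuallyEq (by
    filter_upwards [Ioi_mem_nhds hz] with y hy
    exact J_eq hμ (le_of_lt hy))
  convert h5 using 1
  rw [J_eq hμ hz.le, J_eq (by linarith) hz.le, Real.rpow_sub hz2, Real.rpow_add hz2, Real.rpow_one]
  simp only [Function.comp, Pi.pow_apply]
  field_simp
  ring

lemma J_rec {μ z : ℝ} (hμ : 1 ≤ μ) (hz : 0 < z) :
    besselJ (μ - 1) z + besselJ (μ + 1) z = 2 * μ / z * besselJ μ z := by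
  have hz2 : 0 < z / 2 := by positivity
  have := HB_rec hμ ((z / 2) ^ 2)
  rw [J_eq (by linarith) hz.le, J_eq (by linarith) hz.le, J_eq (by linarith) hz.le, Real.rpow_sub hz2, Real.rpow_add hz2, Real.rpow_one]
  have e : HB (μ - 1) ((z / 2) ^ 2) = μ * HB μ ((z / 2) ^ 2) - (z / 2) ^ 2 * HB (μ + 1) ((z / 2) ^ 2) := by linarith
  rw [e]
  field_simp
  ring

lemma J_pos_near {μ : ℝ} (hμ : 0 ≤ μ) : ∃ δ > 0, ∀ z, 0 < z → z < δ → 0 < besselJ μ z := by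
  have hH : Continuous (HB μ) := continuous_iff_continuousAt.2 fun t => (HB_deriv hμ t).continuousAt
  have hc : Continuous (fun z : ℝ => HB μ ((z / 2) ^ 2)) := hH.comp (by fun_prop)
  have h0 : 0 < HB μ ((0 / 2) ^ 2) := by simpa using HB_zero_pos hμ
  have := hc.continuousAt.eventually (lt_mem_nhds h0)
  obtain ⟨δ, hδ, h⟩ := Metric.eventually_nhds_iff.1 this
  refine ⟨δ, hδ, fun z hz hzd => ?_⟩
  rw [J_eq hμ hz.le]
  have := h (y := z) (by simpa [abs_of_pos hz] using hzd)
  positivity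

lemma J_deriv' {μ z : ℝ} (hμ : 1 ≤ μ) (hz : 0 < z) :
    HasDerivAt (besselJ μ) (besselJ (μ - 1) z - μ / z * besselJ μ z) z := by
  have h := J_deriv (show 0 ≤ μ by linarith) hz
  have r := J_rec hμ hz
  convert h using 1
  have : 2 * μ / z * besselJ μ z = 2 * (μ / z * besselJ μ z) := by ring
  linarith

lemma J_deriv'' {μ z : ℝ} (hμ : 1 ≤ μ) (hz : 0 < z) :
    HasDerivAt (besselJ (μ - 1)) ((μ - 1) / z * besselJ (μ - 1) z - besselJ μ z) z := by
  have h := J_deriv (show 0 ≤ μ - 1 by linarith) hz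
  rwa [sub_add_cancel] at h

noncomputable def vB (μ z : ℝ) : ℝ := z * besselJ (μ - 1) z - μ * besselJ μ z

lemma J_zero {μ : ℝ} (hμ : 1 ≤ μ) : besselJ μ 0 = 0 := by
  rw [J_eq (by linarith) le_rfl]
  simp [Real.zero_rpow (show μ ≠ 0 by linarith)]

lemma v_zero {μ : ℝ} (hμ : 1 ≤ μ) : vB μ 0 = 0 := by
  simp [vB, J_zero hμ]

lemma v_cont {μ : ℝ} (hμ : 1 ≤ μ) : ContinuousOn (vB μ) (Ici 0) :=
  (continuousOn_id.mul (J_cont (by linarith))).sub (continuousOn_const.mul (J_cont (by linarith)))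

lemma u_deriv {μ z : ℝ} (hμ : 1 ≤ μ) (hz : 0 < z) :
    HasDerivAt (besselJ μ) (vB μ z / z) z := by
  convert J_deriv' hμ hz using 1
  unfold vB; field_simp

lemma v_deriv {μ z : ℝ} (hμ : 1 ≤ μ) (hz : 0 < z) :
    HasDerivAt (vB μ) ((μ ^ 2 - z ^ 2) / z * besselJ μ z) z := by
  have h := ((hasDerivAt_id z).mul (J_deriv'' hμ hz)).sub ((J_deriv' hμ hz).const_mul μ)
  have h' : HasDerivAt (vB μ) _ z := h
  refine h'.congr_deriv ?_
  simp only [id]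
  field_simp
  ring

lemma no_common_s7 {μ z : ℝ} (hμ : 1 ≤ μ) (hz : 0 < z) (h1 : besselJ μ z = 0) (h2 : vB μ z = 0) : False := by
  set E : ℝ → ℝ := fun z => vB μ z ^ 2 + (z ^ 2 - μ ^ 2) * besselJ μ z ^ 2 with hE
  have hu := J_cont (show 0 ≤ μ by linarith)
  have hv := v_cont hμ
  have hc : ContinuousOn E (Ici 0) :=
    (hv.pow 2).add (ContinuousOn.mul (by fun_prop) (hu.pow 2))
  have hd : ∀ x, 0 < x → HasDerivAt E (2 * x * besselJ μ x ^ 2) x := by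
    intro x hx
    have h := ((v_deriv hμ hx).pow 2).add ((((hasDerivAt_id x).pow 2).sub_const (μ ^ 2)).mul ((u_deriv hμ hx).pow 2))
    have h' : HasDerivAt E _ x := h
    refine h'.congr_deriv ?_
    simp only [id, Pi.pow_apply]
    field_simp
    ring
  have hm : MonotoneOn E (Ici 0) := by
    apply monotoneOn_of_deriv_nonneg (convex_Ici 0) hc
    · intro x hx
      rw [interior_Ici] at hx
      exact (hd x hx).differentiableAt.differentiableWithinAt
    · intro x hx
      rw [interior_Ici] at hx
      rw [(hd x hx).deriv]
      have : 0 < x := hx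
      positivity
  have E0 : E 0 = 0 := by simp [hE, J_zero hμ, v_zero hμ]
  have Ez : E z = 0 := by simp [hE, h1, h2]
  obtain ⟨δ, hδ, hp⟩ := J_pos_near (show 0 ≤ μ by linarith)
  set y := min δ z / 2 with hy
  have hmin : 0 < min δ z := lt_min hδ hz
  have hy0 : 0 < y := by positivity
  have hyδ : y < δ := by have := min_le_left δ z; linarith
  have hyz : y < z := by have := min_le_right δ z; linarith
  have ec : E =ᶠ[𝓝 y] fun _ => 0 := by
    filter_upwards [Ioo_mem_nhds hy0 hyz] with x hx
    apply le_antisymm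
    · rw [← Ez]; exact hm hx.1.le hz.le hx.2.le
    · rw [← E0]; exact hm self_mem_Ici hx.1.le hx.1.le
  have := ((hasDerivAt_const y (0 : ℝ)).congr_of_eventuallyEq ec).unique (hd y hy0)
  have hpy := hp y hy0 hyδ
  have : 0 < 2 * y * besselJ μ y ^ 2 := by positivity
  linarith

lemma uv_pos {μ z : ℝ} (hμ : 1 ≤ μ) (hz : 0 < z) (hz' : z ≤ μ) : 0 < besselJ μ z * vB μ z := by
  have hu := J_cont (show 0 ≤ μ by linarith)
  have hv := v_cont hμ
  have hm : StrictMonoOn (fun z => besselJ μ z * vB μ z) (Icc 0 μ) := by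
    apply strictMonoOn_of_deriv_pos (convex_Icc 0 μ) ((hu.mul hv).mono Icc_subset_Ici_self)
    intro x hx
    rw [interior_Icc] at hx
    have hx0 : 0 < x := hx.1
    have h := (u_deriv hμ hx.1).mul (v_deriv hμ hx.1)
    rw [h.deriv]
    have e : vB μ x / x * vB μ x + besselJ μ x * ((μ ^ 2 - x ^ 2) / x * besselJ μ x) =
      (vB μ x ^ 2 + (μ ^ 2 - x ^ 2) * besselJ μ x ^ 2) / x := by ring
    rw [e]
    apply div_pos _ hx0
    have hpos : 0 < μ ^ 2 - x ^ 2 := by nlinarith [hx.2]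
    by_cases hJ : besselJ μ x = 0
    · have : vB μ x ≠ 0 := fun h => no_common_s7 hμ hx0 hJ h
      positivity
    · positivity
  have := hm (left_mem_Icc.2 (by linarith)) ⟨hz.le, hz'⟩ hz
  simpa [J_zero hμ] using this

lemma ivt_zero {f : ℝ → ℝ} {a b : ℝ} (hab : a < b) (hf : ContinuousOn f (Icc a b)) (h : f a * f b < 0) :
    ∃ x ∈ Ioo a b, f x = 0 := by
  have : ∃ x ∈ Icc a b, f x = 0 := by
    rcases mul_neg_iff.1 h with ⟨h1, h2⟩ | ⟨h1, h2⟩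
    · exact intermediate_value_Icc' hab.le hf ⟨h2.le, h1.le⟩
    · exact intermediate_value_Icc hab.le hf ⟨h1.le, h2.le⟩
  obtain ⟨x, hx, hx0⟩ := this
  refine ⟨x, ⟨lt_of_le_of_ne hx.1 ?_, lt_of_le_of_ne hx.2 ?_⟩, hx0⟩
  · rintro rfl; simp [hx0] at h
  · rintro rfl; simp [hx0] at h

lemma J_pos {μ z : ℝ} (hμ : 1 ≤ μ) (hz : 0 < z) (hz' : z ≤ μ) : 0 < besselJ μ z := by
  have hu := J_cont (show 0 ≤ μ by linarith)
  by_contra hneg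
  have hne : besselJ μ z ≠ 0 := fun h => by simpa [h] using uv_pos hμ hz hz'
  have hlt : besselJ μ z < 0 := lt_of_le_of_ne (not_lt.1 hneg) hne
  obtain ⟨δ, hδ, hp⟩ := J_pos_near (show 0 ≤ μ by linarith)
  set y := min δ z / 2 with hy
  have hmin : 0 < min δ z := lt_min hδ hz
  have hy0 : 0 < y := by positivity
  have hyδ : y < δ := by have := min_le_left δ z; linarith
  have hyz : y < z := by have := min_le_right δ z; linarith
  obtain ⟨x, hx, hx0⟩ := ivt_zero hyz (hu.mono fun x hx => hy0.le.trans hx.1)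
    (mul_neg_of_pos_of_neg (hp y hy0 hyδ) hlt)
  simpa [hx0] using uv_pos hμ (hy0.trans hx.1) (hx.2.le.trans hz')

/-- the difference -/
noncomputable def fB (μ z : ℝ) : ℝ := besselJ (μ - 1) z - besselJ μ z

lemma f_pos {μ z : ℝ} (hμ : 1 ≤ μ) (hz : 0 < z) (hz' : z ≤ μ) : 0 < fB μ z := by
  have h1 := J_pos hμ hz hz'
  have h2 : 0 < vB μ z := (pos_iff_pos_of_mul_pos (uv_pos hμ hz hz')).1 h1
  have : z * fB μ z = vB μ z + (μ - z) * besselJ μ z := by unfold fB vB; ring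
  have h3 : 0 < z * fB μ z := by
    rw [this]; have : 0 ≤ μ - z := by linarith
    positivity
  exact (pos_iff_pos_of_mul_pos h3).1 hz

lemma f_cont {μ : ℝ} (hμ : 1 ≤ μ) : ContinuousOn (fB μ) (Ici 0) :=
  (J_cont (by linarith)).sub (J_cont (by linarith))

lemma f_deriv {μ z : ℝ} (hμ : 1 ≤ μ) (hz : 0 < z) (h : fB μ z = 0) :
    HasDerivAt (fB μ) (-(2 - (2 * μ - 1) / z) * besselJ μ z) z := by
  have hd := (J_deriv'' hμ hz).sub (J_deriv' hμ hz)
  have hd' : HasDerivAt (fB μ) _ z := hd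
  refine hd'.congr_deriv ?_
  have : besselJ (μ - 1) z = besselJ μ z := by unfold fB at h; linarith
  rw [this]; ring

lemma J_ne {μ z : ℝ} (hμ : 1 ≤ μ) (hz : 0 < z) (h : fB μ z = 0) : besselJ μ z ≠ 0 := by
  intro h0
  have : besselJ (μ - 1) z = 0 := by unfold fB at h; linarith
  exact no_common_s7 hμ hz h0 (by simp [vB, h0, this])

lemma zero_gt {μ z : ℝ} (hμ : 1 ≤ μ) (hz : 0 < z) (h : fB μ z = 0) : μ < z := by
  by_contra hc
  have := f_pos hμ hz (not_lt.1 hc)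
  linarith

lemma W1 {μ z : ℝ} (hμ : 1 ≤ μ) (hz : 0 < z) (h : fB μ z = 0) :
    ∃ d, HasDerivAt (fB μ) d z ∧ d * fB (μ + 1) z < 0 := by
  refine ⟨_, f_deriv hμ hz h, ?_⟩
  have hzm := zero_gt hμ hz h
  have r := J_rec hμ hz
  have h1 : besselJ (μ - 1) z = besselJ μ z := by unfold fB at h; linarith
  have e : fB (μ + 1) z = (2 - 2 * μ / z) * besselJ μ z := by
    unfold fB; rw [add_sub_cancel_right]; rw [h1] at r; linarith
  rw [e]
  have hne := J_ne hμ hz h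
  have p1 : 0 < 2 - 2 * μ / z := by rw [sub_pos, div_lt_iff₀ hz]; linarith
  have p2 : 0 < 2 - (2 * μ - 1) / z := by rw [sub_pos, div_lt_iff₀ hz]; linarith
  have : 0 < (2 - (2 * μ - 1) / z) * (2 - 2 * μ / z) * besselJ μ z ^ 2 := by positivity
  linarith

lemma W2 {μ z : ℝ} (hμ : 1 ≤ μ) (hz : 0 < z) (h : fB (μ + 1) z = 0) :
    ∃ d, HasDerivAt (fB (μ + 1)) d z ∧ 0 < d * fB μ z := by
  have hμ' : 1 ≤ μ + 1 := by linarith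
  refine ⟨_, f_deriv hμ' hz h, ?_⟩
  have hzm := zero_gt hμ' hz h
  have r := J_rec hμ hz
  have h1 : besselJ μ z = besselJ (μ + 1) z := by
    unfold fB at h; rw [add_sub_cancel_right] at h; linarith
  have e : fB μ z = -(2 - 2 * μ / z) * besselJ (μ + 1) z := by
    unfold fB; rw [h1] at r ⊢; linarith
  rw [e]
  have hne := J_ne hμ' hz h
  have p1 : 0 < 2 - 2 * μ / z := by rw [sub_pos, div_lt_iff₀ hz]; linarith
  have p2 : 0 < 2 - (2 * (μ + 1) - 1) / z := by rw [sub_pos, div_lt_iff₀ hz]; linarith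
  have : 0 < (2 - (2 * (μ + 1) - 1) / z) * (2 - 2 * μ / z) * besselJ (μ + 1) z ^ 2 := by positivity
  linarith

lemma sgn_right {f : ℝ → ℝ} {a d : ℝ} (h : HasDerivAt f d a) (h0 : f a = 0) (hd : 0 < d) :
    ∀ᶠ x in 𝓝[>] a, 0 < f x := by
  have := (hasDerivAt_iff_tendsto_slope_left_right.1 h).2.eventually (lt_mem_nhds hd)
  filter_upwards [this, self_mem_nhdsWithin] with x hx hxa
  rw [slope_def_field, h0, sub_zero] at hx
  have : 0 < x - a := sub_pos.2 hxa
  exact (div_pos_iff_of_pos_right this).1 hx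

lemma sgn_left {f : ℝ → ℝ} {a d : ℝ} (h : HasDerivAt f d a) (h0 : f a = 0) (hd : 0 < d) :
    ∀ᶠ x in 𝓝[<] a, f x < 0 := by
  have := (hasDerivAt_iff_tendsto_slope_left_right.1 h).1.eventually (lt_mem_nhds hd)
  filter_upwards [this, self_mem_nhdsWithin] with x hx hxa
  rw [slope_def_field, h0, sub_zero] at hx
  have h1 : x - a < 0 := sub_neg.2 hxa
  by_contra hc
  have := div_nonpos_of_nonneg_of_nonpos (not_lt.1 hc) h1.le
  linarith

lemma btw_aux {f : ℝ → ℝ} {a b da db : ℝ} (hab : a < b) (hf : ContinuousOn f (Icc a b))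
    (ha : HasDerivAt f da a) (hb : HasDerivAt f db b) (ha0 : f a = 0) (hb0 : f b = 0)
    (hda : 0 < da) (hdb : 0 < db) : ∃ x ∈ Ioo a b, f x = 0 := by
  set m := (a + b) / 2 with hm
  obtain ⟨x, hx, hxm⟩ := ((sgn_right ha ha0 hda).and (Ioo_mem_nhdsGT (show a < m by linarith))).exists
  obtain ⟨y, hy, hym⟩ := ((sgn_left hb hb0 hdb).and (Ioo_mem_nhdsLT (show m < b by linarith))).exists
  obtain ⟨z, hz, hz0⟩ := ivt_zero (hxm.2.trans hym.1)
    (hf.mono (Icc_subset_Icc hxm.1.le hym.2.le)) (mul_neg_of_pos_of_neg hx hy)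
  exact ⟨z, ⟨hxm.1.trans hz.1, hz.2.trans hym.2⟩, hz0⟩

lemma btw {f : ℝ → ℝ} {a b da db : ℝ} (hab : a < b) (hf : ContinuousOn f (Icc a b))
    (ha : HasDerivAt f da a) (hb : HasDerivAt f db b) (ha0 : f a = 0) (hb0 : f b = 0)
    (hd : 0 < da * db) : ∃ x ∈ Ioo a b, f x = 0 := by
  rcases mul_pos_iff.1 hd with ⟨h1, h2⟩ | ⟨h1, h2⟩
  · exact btw_aux hab hf ha hb ha0 hb0 h1 h2
  · obtain ⟨x, hx, hx0⟩ := btw_aux hab hf.neg ha.neg hb.neg (by simp [ha0]) (by simp [hb0])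
      (neg_pos.2 h1) (neg_pos.2 h2)
    exact ⟨x, hx, by simpa using hx0⟩

lemma interl {f g : ℝ → ℝ} {a b da db : ℝ} (hab : a < b) (hf : ContinuousOn f (Icc a b))
    (hg : ContinuousOn g (Icc a b))
    (ha : HasDerivAt f da a) (hb : HasDerivAt f db b) (ha0 : f a = 0) (hb0 : f b = 0)
    (h : 0 < (da * g a) * (db * g b)) (hno : ∀ x ∈ Ioo a b, f x ≠ 0) : ∃ x ∈ Ioo a b, g x = 0 := by
  apply ivt_zero hab hg
  by_contra hc
  have hgg : 0 < g a * g b := by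
    refine lt_of_le_of_ne (not_lt.1 hc) fun h0 => ?_
    have : (da * g a) * (db * g b) = da * db * (g a * g b) := by ring
    rw [this, ← h0] at h; simp at h
  have : 0 < da * db := by
    have e : (da * g a) * (db * g b) = da * db * (g a * g b) := by ring
    rw [e] at h
    exact (pos_iff_pos_of_mul_pos h).2 hgg
  obtain ⟨x, hx, hx0⟩ := btw hab hf ha hb ha0 hb0 this
  exact hno x hx hx0

lemma enum_no {f : ℝ → ℝ} {x : ℕ → ℝ} (h : EnumPosZeros f x) {k : ℕ} (hk : 1 ≤ k) :
    ∀ z ∈ Ioo (x k) (x (k + 1)), f z ≠ 0 := by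
  rintro z ⟨h1, h2⟩ h0
  obtain ⟨j, hj, rfl⟩ := h.2.2 z ((h.2.1 k hk).1.trans h1) h0
  have a1 := (h.1.lt_iff_lt hk hj).1 h1
  have a2 := (h.1.lt_iff_lt hj (show 1 ≤ k + 1 by omega)).1 h2
  omega

lemma main_aux (ν : ℝ) (hν : 1 ≤ ν) (a b : ℕ → ℝ) (ha : EnumPosZeros (fB ν) a)
    (hb : EnumPosZeros (fB (ν + 1)) b) (k : ℕ) (hk : 1 ≤ k) : a k < b k ∧ b k < a (k + 1) := by
  have hν' : 1 ≤ ν + 1 := by linarith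
  have A : ∀ k, 1 ≤ k → ∃ j, 1 ≤ j ∧ a k < b j ∧ b j < a (k + 1) := by
    intro k hk
    obtain ⟨p1, z1⟩ := ha.2.1 k hk
    obtain ⟨p2, z2⟩ := ha.2.1 (k + 1) (by omega)
    obtain ⟨d1, e1, w1⟩ := W1 hν p1 z1
    obtain ⟨d2, e2, w2⟩ := W1 hν p2 z2
    have hs : Icc (a k) (a (k + 1)) ⊆ Ici 0 := fun x hx => p1.le.trans hx.1
    obtain ⟨x, hx, hx0⟩ := interl (ha.1 hk (show 1 ≤ k + 1 by omega) (by omega))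
      ((f_cont hν).mono hs) ((f_cont hν').mono hs) e1 e2 z1 z2 (mul_pos_of_neg_of_neg w1 w2) (enum_no ha hk)
    obtain ⟨j, hj, rfl⟩ := hb.2.2 x (p1.trans hx.1) hx0
    exact ⟨j, hj, hx⟩
  have B : ∀ k, 1 ≤ k → ∃ j, 1 ≤ j ∧ b k < a j ∧ a j < b (k + 1) := by
    intro k hk
    obtain ⟨p1, z1⟩ := hb.2.1 k hk
    obtain ⟨p2, z2⟩ := hb.2.1 (k + 1) (by omega)
    obtain ⟨d1, e1, w1⟩ := W2 hν p1 z1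
    obtain ⟨d2, e2, w2⟩ := W2 hν p2 z2
    have hs : Icc (b k) (b (k + 1)) ⊆ Ici 0 := fun x hx => p1.le.trans hx.1
    obtain ⟨x, hx, hx0⟩ := interl (hb.1 hk (show 1 ≤ k + 1 by omega) (by omega))
      ((f_cont hν').mono hs) ((f_cont hν).mono hs) e1 e2 z1 z2 (mul_pos w1 w2) (enum_no hb hk)
    obtain ⟨j, hj, rfl⟩ := ha.2.2 x (p1.trans hx.1) hx0
    exact ⟨j, hj, hx⟩
  -- base
  have C : a 1 < b 1 := by
    obtain ⟨p1, z1⟩ := hb.2.1 1 le_rfl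
    obtain ⟨d, e, w⟩ := W2 hν p1 z1
    have hgt := zero_gt hν' p1 z1
    have hdneg : d < 0 := by
      by_contra hc
      have hd : 0 < d := by
        refine lt_of_le_of_ne (not_lt.1 hc) fun h0 => ?_
        rw [← h0] at w; simp at w
      obtain ⟨y, hy, hym⟩ := ((sgn_left e z1 hd).and (Ioo_mem_nhdsLT hgt)).exists
      obtain ⟨x, hx, hx0⟩ := ivt_zero hym.1
        ((f_cont hν').mono fun x hx => (show (0 : ℝ) ≤ ν + 1 by linarith).trans hx.1)
        (mul_neg_of_pos_of_neg (f_pos hν' (by linarith) le_rfl) hy)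
      obtain ⟨j, hj, rfl⟩ := hb.2.2 x (by linarith [hx.1]) hx0
      have := (hb.1.le_iff_le (show 1 ≤ 1 from le_rfl) hj).2 hj
      linarith [hx.2, hym.2]
    have hfneg : fB ν (b 1) < 0 := by
      by_contra hc
      nlinarith [not_lt.1 hc]
    obtain ⟨x, hx, hx0⟩ := ivt_zero (show ν < b 1 by linarith)
        ((f_cont hν).mono fun x hx => (show (0 : ℝ) ≤ ν by linarith).trans hx.1)
        (mul_neg_of_pos_of_neg (f_pos hν (by linarith) le_rfl) hfneg)
    obtain ⟨j, hj, rfl⟩ := ha.2.2 x (by linarith [hx.1]) hx0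
    exact ((ha.1.le_iff_le (show 1 ≤ 1 from le_rfl) hj).2 hj).trans_lt hx.2
  induction k, hk using Nat.le_induction with
  | base =>
    refine ⟨C, ?_⟩
    obtain ⟨j, hj, h1, h2⟩ := A 1 le_rfl
    exact ((hb.1.le_iff_le (show 1 ≤ 1 from le_rfl) hj).2 hj).trans_lt h2
  | succ k hk ih =>
    have hk1 : k + 1 ∈ Ici 1 := show 1 ≤ k + 1 by omega
    have first : a (k + 1) < b (k + 1) := by
      obtain ⟨j, hj, h1, h2⟩ := B k hk
      have : k < j := (ha.1.lt_iff_lt hk hj).1 (ih.1.trans h1)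
      exact ((ha.1.le_iff_le hk1 hj).2 this).trans_lt h2
    refine ⟨first, ?_⟩
    obtain ⟨j, hj, h1, h2⟩ := A (k + 1) hk1
    have : k < j := (hb.1.lt_iff_lt hk hj).1 (ih.2.trans h1)
    exact ((hb.1.le_iff_le hk1 hj).2 this).trans_lt h2

/-- For `ν ≥ 1` and every `k ≥ 1`,
`λ⁻_{ν,k+1} < λ⁻_{ν−1,k+2} < λ⁻_{ν,k+2}`: the positive zeroes of differences of Bessel
functions of consecutive orders interlace. -/
theorem stmt7 (ν : ℝ) (hν : 1 ≤ ν) (k : ℕ) (hk : 1 ≤ k)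
    (lamm1 lamn : ℕ → ℝ)
    (hlamm1 : EnumPosZeros (fun z => besselJ (ν - 1) z - besselJ ν z) lamm1)
    (hlamn : EnumPosZeros (fun z => besselJ ν z - besselJ (ν + 1) z) lamn) :
    lamn (k + 1) < lamm1 (k + 2) ∧ lamm1 (k + 2) < lamn (k + 2) := by
  have h2 : (fun z => besselJ ν z - besselJ (ν + 1) z) = fB (ν + 1) := by
    funext z; unfold fB; rw [add_sub_cancel_right]
  rw [h2] at hlamn
  have h1 : EnumPosZeros (fB ν) lamm1 := hlamm1
  exact ⟨(main_aux ν hν lamm1 lamn h1 hlamn (k + 1) (by omega)).2,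
    (main_aux ν hν lamm1 lamn h1 hlamn (k + 2) (by omega)).1⟩
end
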